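/- arXiv:2504.14518 — 2 statements merged into one kernel-verified Lean document; each statement's English description precedes it below -/
import Mathlib

section
/- The integral solutions (X, Y) of the Mordell equation Y^2 = X^3 + 1323 are exactly (X, Y) = (−3, 36) and (X, Y) = (−3, −36), and the Mordell equation Y^2 = X^3 − 1323 has no integral solutions. -/
theorem mordell_round (m n : ℤ) (hn : n ≠ 0) : ∃ q : ℤ, 4 * (m - n * q) ^ 2 ≤ n ^ 2 := by
  have h1 := Int.emod_add_mul_ediv m n
  have h2 := Int.emod_nonneg m hn
  have h3 := Int.emod_lt_abs m hn
  rcases le_or_gt (2 * (m % n)) |n| with h | h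
  · refine ⟨m / n, ?_⟩
    have : m - n * (m / n) = m % n := by linarith
    rw [this, ← sq_abs n]
    nlinarith
  · refine ⟨m / n + n.sign, ?_⟩
    have h4 : n * n.sign = |n| := Int.mul_sign_self n ▸ (Int.abs_eq_natAbs n).symm
    have : m - n * (m / n + n.sign) = m % n - |n| := by rw [mul_add, h4]; linarith
    rw [this, ← sq_abs n]
    nlinarith

theorem mordell_div3 (x y : ℤ√3) (hy : y ≠ 0) :
    ∃ q : ℤ√3, (x - y * q).norm.natAbs < y.norm.natAbs := by
  have hn : y.norm ≠ 0 := by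
    intro h
    exact hy ((Zsqrtd.norm_eq_zero (by intro n hn; have : n < 2 := by nlinarith
                                       have : -2 < n := by nlinarith
                                       interval_cases n <;> omega) y).1 h)
  obtain ⟨q1, h1⟩ := mordell_round (x * star y).re y.norm hn
  obtain ⟨q2, h2⟩ := mordell_round (x * star y).im y.norm hn
  refine ⟨⟨q1, q2⟩, ?_⟩
  have key : (x - y * ⟨q1, q2⟩).norm * y.norm =
      ((x * star y).re - y.norm * q1) ^ 2 - 3 * ((x * star y).im - y.norm * q2) ^ 2 := by
    simp [Zsqrtd.norm_def]; ring
  set r := (x - y * ⟨q1, q2⟩).norm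
  set n := y.norm
  set A := (x * star y).re - n * q1
  set B := (x * star y).im - n * q2
  have hp : 0 < n ^ 2 := by positivity
  have h3 : |r * n| < n ^ 2 := by
    rw [key, abs_lt]; constructor <;> nlinarith [sq_nonneg A, sq_nonneg B]
  rw [abs_mul, ← sq_abs n, sq] at h3
  have := lt_of_mul_lt_mul_right h3 (abs_nonneg n)
  rw [Int.abs_eq_natAbs, Int.abs_eq_natAbs] at this
  exact_mod_cast this

theorem mordell_norm3_pos (y : ℤ√3) (hy : y ≠ 0) : 1 ≤ y.norm.natAbs := by
  obtain ⟨q, h⟩ := mordell_div3 0 y hy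
  omega

theorem mordell_norm3_le (a b : ℤ√3) (hb : b ≠ 0) :
    a.norm.natAbs ≤ (a * b).norm.natAbs := by
  rw [Zsqrtd.norm_mul, Int.natAbs_mul]
  exact Nat.le_mul_of_pos_right _ (mordell_norm3_pos b hb)

theorem mordell_exq3 (x y : ℤ√3) :
    ∃ q : ℤ√3, y ≠ 0 → (x - y * q).norm.natAbs < y.norm.natAbs := by
  by_cases hy : y = 0
  · exact ⟨0, fun h => absurd hy h⟩
  · obtain ⟨q, hq⟩ := mordell_div3 x y hy
    exact ⟨q, fun _ => hq⟩

open Classical in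
noncomputable def mordell_q3 (x y : ℤ√3) : ℤ√3 :=
  if y = 0 then 0 else (mordell_exq3 x y).choose

theorem mordell_q3_spec (x y : ℤ√3) (hy : y ≠ 0) :
    (x - y * mordell_q3 x y).norm.natAbs < y.norm.natAbs := by
  rw [mordell_q3, if_neg hy]
  exact (mordell_exq3 x y).choose_spec hy

noncomputable instance mordell_ed3 : EuclideanDomain (ℤ√3) :=
  { (inferInstance : CommRing (ℤ√3)), (inferInstance : Nontrivial (ℤ√3)) with
    quotient := mordell_q3
    remainder := fun x y => x - y * mordell_q3 x y
    quotient_zero := fun x => if_pos rfl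
    quotient_mul_add_remainder_eq := fun _ _ => by ring
    r := _
    r_wellFounded := (measure (Int.natAbs ∘ Zsqrtd.norm)).wf
    remainder_lt := fun x y hy => mordell_q3_spec x y hy
    mul_left_not_lt := fun a b hb0 => not_lt_of_ge <| mordell_norm3_le a b hb0 }

def mordell_eps : Pell.Solution₁ 3 := Pell.Solution₁.mk 2 1 (by norm_num)

theorem mordell_eps_fund : Pell.IsFundamental mordell_eps := by
  refine ⟨?_, ?_, ?_⟩
  · simp [mordell_eps]
  · simp [mordell_eps]
  · intro b hb
    simp [mordell_eps]; omega

theorem mordell_unit3 (u : ℤ√3) (hu : IsUnit u) :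
    ∃ e v : ℤ√3, u = e * v ^ 3 ∧ (e = 1 ∨ e = ⟨2, 1⟩ ∨ e = ⟨2, -1⟩) := by
  have h1 : u.norm = 1 := by
    have h := Zsqrtd.norm_eq_one_iff.2 hu
    rcases Int.natAbs_eq_iff.1 h with h | h
    · exact_mod_cast h
    · exfalso
      rw [Zsqrtd.norm_def] at h
      have := congrArg (fun t : ℤ => (t : ZMod 3)) h
      push_cast at this
      have h3 : (3 : ZMod 3) = 0 := rfl
      rw [h3] at this
      generalize (u.re : ZMod 3) = s at this
      generalize (u.im : ZMod 3) = t at this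
      revert this; revert s t; decide
  let U : Pell.Solution₁ 3 := ⟨u, Zsqrtd.norm_eq_one_iff_mem_unitary.1 h1⟩
  have hU : (U : ℤ√3) = u := rfl
  have hz (n : ℤ) : ∃ (e : Pell.Solution₁ 3) (k : ℤ), mordell_eps ^ n = e * (mordell_eps ^ k) ^ 3 ∧
      ((e : ℤ√3) = 1 ∨ (e : ℤ√3) = ⟨2, 1⟩ ∨ (e : ℤ√3) = ⟨2, -1⟩) := by
    have : n % 3 = 0 ∨ n % 3 = 1 ∨ n % 3 = 2 := by omega
    rcases this with h | h | h
    · refine ⟨1, n / 3, ?_, Or.inl rfl⟩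
      rw [one_mul, ← zpow_natCast, ← zpow_mul]; congr 1; push_cast; omega
    · refine ⟨mordell_eps, n / 3, ?_, Or.inr (Or.inl rfl)⟩
      rw [← zpow_natCast, ← zpow_mul, ← zpow_one_add]; congr 1; push_cast; omega
    · refine ⟨mordell_eps⁻¹, n / 3 + 1, ?_, Or.inr (Or.inr rfl)⟩
      rw [← zpow_natCast, ← zpow_mul, ← zpow_neg_one, ← zpow_add]; congr 1; push_cast; omega
  obtain ⟨n, hn | hn⟩ := mordell_eps_fund.eq_zpow_or_neg_zpow U
  · obtain ⟨e, k, h, he⟩ := hz n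
    refine ⟨e, ((mordell_eps ^ k : Pell.Solution₁ 3) : ℤ√3), ?_, he⟩
    rw [← hU, hn, h]; rfl
  · obtain ⟨e, k, h, he⟩ := hz n
    refine ⟨e, -((mordell_eps ^ k : Pell.Solution₁ 3) : ℤ√3), ?_, he⟩
    rw [← hU, hn, h]
    have : ((-(e * (mordell_eps ^ k) ^ 3) : Pell.Solution₁ 3) : ℤ√3) =
      - ((e : ℤ√3) * ((mordell_eps ^ k : Pell.Solution₁ 3) : ℤ√3) ^ 3) := rfl
    rw [this]; ring

theorem mordell_cube3 (p q x : ℤ) (h : p ^ 2 - 3 * q ^ 2 = x ^ 3)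
    (hc : IsCoprime x (2 * p) ∨ IsCoprime x (6 * q)) :
    ∃ a b : ℤ, (p = a ^ 3 + 9 * a * b ^ 2 ∧ q = 3 * a ^ 2 * b + 3 * b ^ 3) ∨
      (p = 2 * (a ^ 3 + 9 * a * b ^ 2) + 3 * (3 * a ^ 2 * b + 3 * b ^ 3) ∧
        q = (a ^ 3 + 9 * a * b ^ 2) + 2 * (3 * a ^ 2 * b + 3 * b ^ 3)) ∨
      (p = 2 * (a ^ 3 + 9 * a * b ^ 2) - 3 * (3 * a ^ 2 * b + 3 * b ^ 3) ∧
        q = -(a ^ 3 + 9 * a * b ^ 2) + 2 * (3 * a ^ 2 * b + 3 * b ^ 3)) := by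
  have hm : (⟨p, q⟩ : ℤ√3) * ⟨p, -q⟩ = (x : ℤ√3) ^ 3 := by
    have : ((x : ℤ√3)) ^ 3 = ((x ^ 3 : ℤ) : ℤ√3) := by push_cast; rfl
    rw [this, ← h]
    ext <;> simp [sq] <;> ring
  have hcop : IsCoprime (⟨p, q⟩ : ℤ√3) ⟨p, -q⟩ := by
    rcases hc with hc | hc
    · obtain ⟨s, t, hst⟩ := hc.pow_left (m := 3)
      refine ⟨(s : ℤ√3) * ⟨p, -q⟩ + (t : ℤ√3), (t : ℤ√3), ?_⟩
      have : (s : ℤ√3) * x ^ 3 + t * (2 * p) = 1 := by exact_mod_cast congrArg (Int.cast : ℤ → ℤ√3) hst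
      rw [← this, ← hm]
      ext <;> simp <;> ring
    · obtain ⟨s, t, hst⟩ := hc.pow_left (m := 3)
      refine ⟨(s : ℤ√3) * ⟨p, -q⟩ + (t : ℤ√3) * ⟨0, 1⟩, -((t : ℤ√3) * ⟨0, 1⟩), ?_⟩
      have : (s : ℤ√3) * x ^ 3 + t * (6 * q) = 1 := by exact_mod_cast congrArg (Int.cast : ℤ → ℤ√3) hst
      rw [← this, ← hm]
      ext <;> simp <;> ring
  obtain ⟨d, u, hu⟩ := exists_associated_pow_of_mul_eq_pow' hcop hm
  obtain ⟨e, v, huv, he⟩ := mordell_unit3 u u.isUnit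
  have h1 : e * (d * v) ^ 3 = ⟨p, q⟩ := by rw [← hu, huv]; ring
  generalize d * v = c at h1
  obtain ⟨a, b⟩ := c
  have hre := congrArg Zsqrtd.re h1
  have him := congrArg Zsqrtd.im h1
  refine ⟨a, b, ?_⟩
  rcases he with rfl | rfl | rfl
  · left
    simp [pow_succ] at hre him
    exact ⟨by rw [← hre]; ring, by rw [← him]; ring⟩
  · right; left
    simp [pow_succ] at hre him
    exact ⟨by rw [← hre]; ring, by rw [← him]; ring⟩
  · right; right
    simp [pow_succ] at hre him
    exact ⟨by rw [← hre]; ring, by rw [← him]; ring⟩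

section
open scoped QuadraticAlgebra
abbrev MordellEis := QuadraticAlgebra ℤ (-1) (-1)

def mordell_nE (u : MordellEis) : ℤ := u.re ^ 2 - u.re * u.im + u.im ^ 2

theorem mordell_nE_mul (u v : MordellEis) :
    mordell_nE (u * v) = mordell_nE u * mordell_nE v := by
  simp [mordell_nE]; ring

theorem mordell_nE_nonneg (u : MordellEis) : 0 ≤ mordell_nE u := by
  unfold mordell_nE; nlinarith [sq_nonneg (u.re - u.im), sq_nonneg u.re, sq_nonneg u.im]

theorem mordell_nE_pos (u : MordellEis) (hu : u ≠ 0) : 0 < mordell_nE u := by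
  rcases (mordell_nE_nonneg u).lt_or_eq with h | h
  · exact h
  · exfalso; apply hu
    unfold mordell_nE at h
    have h1 : u.re = 0 := by
      nlinarith [sq_nonneg (u.re - 2 * u.im), sq_nonneg u.re, sq_nonneg u.im]
    have h2 : u.im = 0 := by
      nlinarith [sq_nonneg (u.im - 2 * u.re), sq_nonneg u.re, sq_nonneg u.im]
    ext <;> simp [h1, h2]

theorem mordell_exqE (x y : MordellEis) :
    ∃ q : MordellEis, y ≠ 0 → (mordell_nE (x - y * q)).natAbs < (mordell_nE y).natAbs := by
  by_cases hy : y = 0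
  · exact ⟨0, fun h => absurd hy h⟩
  have hn := mordell_nE_pos y hy
  let z : MordellEis := x * ⟨y.re - y.im, -y.im⟩
  obtain ⟨q1, h1⟩ := mordell_round z.re (mordell_nE y) hn.ne'
  obtain ⟨q2, h2⟩ := mordell_round z.im (mordell_nE y) hn.ne'
  refine ⟨⟨q1, q2⟩, fun _ => ?_⟩
  have key : mordell_nE (x - y * ⟨q1, q2⟩) * mordell_nE y =
      (z.re - mordell_nE y * q1) ^ 2 - (z.re - mordell_nE y * q1) * (z.im - mordell_nE y * q2)
      + (z.im - mordell_nE y * q2) ^ 2 := by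
    simp [mordell_nE, z]; ring
  have hr := mordell_nE_nonneg (x - y * ⟨q1, q2⟩)
  set r := mordell_nE (x - y * ⟨q1, q2⟩)
  set n := mordell_nE y
  set A := z.re - n * q1
  set B := z.im - n * q2
  have : r < n := by nlinarith [sq_nonneg (A + B), sq_nonneg A, sq_nonneg B]
  omega

open Classical in
noncomputable def mordell_qE (x y : MordellEis) : MordellEis :=
  if y = 0 then 0 else (mordell_exqE x y).choose

theorem mordell_qE_spec (x y : MordellEis) (hy : y ≠ 0) :
    (mordell_nE (x - y * mordell_qE x y)).natAbs < (mordell_nE y).natAbs := by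
  rw [mordell_qE, if_neg hy]
  exact (mordell_exqE x y).choose_spec hy

theorem mordell_nE_le (a b : MordellEis) (hb : b ≠ 0) :
    (mordell_nE a).natAbs ≤ (mordell_nE (a * b)).natAbs := by
  rw [mordell_nE_mul, Int.natAbs_mul]
  exact Nat.le_mul_of_pos_right _ (by have := mordell_nE_pos b hb; omega)

noncomputable instance mordell_edE : EuclideanDomain MordellEis :=
  { (inferInstance : CommRing MordellEis), (inferInstance : Nontrivial MordellEis) with
    quotient := mordell_qE
    remainder := fun x y => x - y * mordell_qE x y
    quotient_zero := fun x => if_pos rfl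
    quotient_mul_add_remainder_eq := fun _ _ => by ring
    r := _
    r_wellFounded := (measure (Int.natAbs ∘ mordell_nE)).wf
    remainder_lt := fun x y hy => mordell_qE_spec x y hy
    mul_left_not_lt := fun a b hb0 => not_lt_of_ge <| mordell_nE_le a b hb0 }

theorem mordell_unitE (u : MordellEis) (hu : IsUnit u) :
    u = 1 ∨ u = -1 ∨ u = ⟨0, 1⟩ ∨ u = ⟨0, -1⟩ ∨ u = ⟨1, 1⟩ ∨ u = ⟨-1, -1⟩ := by
  obtain ⟨v, hv⟩ := hu.exists_right_inv
  have h := congrArg mordell_nE hv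
  rw [mordell_nE_mul] at h
  have h1 : mordell_nE (1 : MordellEis) = 1 := by simp [mordell_nE]
  rw [h1] at h
  have h2 : mordell_nE u = 1 := by
    have := Int.isUnit_iff.1 (IsUnit.of_mul_eq_one _ h)
    have := mordell_nE_nonneg u
    omega
  obtain ⟨a, b⟩ := u
  simp only [mordell_nE] at h2
  have a1 : a ≤ 1 := by nlinarith [sq_nonneg (a - 2 * b)]
  have a2 : -1 ≤ a := by nlinarith [sq_nonneg (a - 2 * b)]
  have b1 : b ≤ 1 := by nlinarith [sq_nonneg (b - 2 * a)]
  have b2 : -1 ≤ b := by nlinarith [sq_nonneg (b - 2 * a)]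
  simp only [QuadraticAlgebra.ext_iff]
  simp only [QuadraticAlgebra.re_one, QuadraticAlgebra.im_one, QuadraticAlgebra.re_neg, QuadraticAlgebra.im_neg]
  interval_cases a <;> interval_cases b <;> simp_all

theorem mordell_even_assoc (d : MordellEis) : ∃ c : MordellEis, c ^ 3 = d ^ 3 ∧
    (c.im % 2 = 0) := by
  have h0 : (⟨0, 1⟩ : MordellEis) ^ 3 = 1 := by
    ext <;> simp [pow_succ]
  by_cases h1 : d.im % 2 = 0
  · exact ⟨d, rfl, h1⟩
  by_cases h2 : d.re % 2 = 0
  · refine ⟨⟨0, 1⟩ ^ 2 * d, ?_, ?_⟩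
    · rw [mul_pow, ← pow_mul, mul_comm 2 3, pow_mul, h0]; simp
    · simp [pow_succ]; omega
  · refine ⟨⟨0, 1⟩ * d, ?_, ?_⟩
    · rw [mul_pow, h0]; simp
    · simp; omega

theorem mordell_cubeE (u v x : ℤ) (h : u ^ 2 + 3 * v ^ 2 = x ^ 3) (hx : x % 2 = 1)
    (hc : IsCoprime x (2 * u) ∨ IsCoprime x (6 * v)) :
    ∃ a b : ℤ, u = a ^ 3 - 9 * a * b ^ 2 ∧ v = 3 * a ^ 2 * b - 3 * b ^ 3 := by
  have hm : (⟨u + v, 2 * v⟩ : MordellEis) * ⟨u - v, -2 * v⟩ = (x : MordellEis) ^ 3 := by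
    have : ((x : MordellEis)) ^ 3 = ((x ^ 3 : ℤ) : MordellEis) := by push_cast; rfl
    rw [this, ← h]
    ext <;> simp [sq] <;> ring
  have hcop : IsCoprime (⟨u + v, 2 * v⟩ : MordellEis) ⟨u - v, -2 * v⟩ := by
    rcases hc with hc | hc
    · obtain ⟨s, t, hst⟩ := hc.pow_left (m := 3)
      refine ⟨(s : MordellEis) * ⟨u - v, -2 * v⟩ + (t : MordellEis), (t : MordellEis), ?_⟩
      have : (s : MordellEis) * x ^ 3 + t * (2 * u) = 1 := by
        exact_mod_cast congrArg (Int.cast : ℤ → MordellEis) hst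
      rw [← this, ← hm]
      ext <;> simp <;> ring
    · obtain ⟨s, t, hst⟩ := hc.pow_left (m := 3)
      refine ⟨(s : MordellEis) * ⟨u - v, -2 * v⟩ - (t : MordellEis) * ⟨1, 2⟩,
        ((t : MordellEis) * ⟨1, 2⟩), ?_⟩
      have : (s : MordellEis) * x ^ 3 + t * (6 * v) = 1 := by
        exact_mod_cast congrArg (Int.cast : ℤ → MordellEis) hst
      rw [← this, ← hm]
      ext <;> simp <;> ring
  obtain ⟨d, w, hw⟩ := exists_associated_pow_of_mul_eq_pow' hcop hm
  obtain ⟨c, hcd, hc2⟩ := mordell_even_assoc d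
  rw [← hcd] at hw
  obtain ⟨p, q⟩ := c
  obtain ⟨b, rfl⟩ : ∃ b, q = 2 * b := ⟨q / 2, by simp at hc2; omega⟩
  obtain ⟨a, rfl⟩ : ∃ a, p = a + b := ⟨p - b, by ring⟩
  have hc3 : (⟨a + b, 2 * b⟩ : MordellEis) ^ 3 =
      ⟨a ^ 3 - 9 * a * b ^ 2 + (3 * a ^ 2 * b - 3 * b ^ 3), 2 * (3 * a ^ 2 * b - 3 * b ^ 3)⟩ := by
    ext <;> simp [pow_succ] <;> ring
  rw [hc3] at hw
  have huv : (u + v) % 2 = 1 := by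
    have h5 : (x ^ 3) % 2 = 1 := by simp [pow_succ, Int.mul_emod, hx]
    rw [← h] at h5
    rcases Int.emod_two_eq_zero_or_one u with h6 | h6 <;>
    rcases Int.emod_two_eq_zero_or_one v with h7 | h7 <;>
      simp [Int.add_emod, Int.mul_emod, pow_two, h6, h7] at h5 ⊢
  have key : ∀ A B : ℤ, u = A → v = B → u = A ∧ v = B := fun A B h1 h2 => ⟨h1, h2⟩
  generalize hA : a ^ 3 - 9 * a * b ^ 2 = A at hw
  generalize hB : 3 * a ^ 2 * b - 3 * b ^ 3 = B at hw
  rcases mordell_unitE w w.isUnit with e | e | e | e | e | e <;> rw [e] at hw <;>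
    have hre := congrArg QuadraticAlgebra.re hw <;>
    have him := congrArg QuadraticAlgebra.im hw <;>
    simp at hre him
  · exact ⟨a, b, by omega, by omega⟩
  · refine ⟨-a, -b, ?_, ?_⟩
    · have : (-a) ^ 3 - 9 * (-a) * (-b) ^ 2 = -A := by rw [← hA]; ring
      omega
    · have : 3 * (-a) ^ 2 * (-b) - 3 * (-b) ^ 3 = -B := by rw [← hB]; ring
      omega
  all_goals (exfalso; omega)

end

/-- The order `ℤ[w]` with `w ^ 3 = 3 * w + 4`; the triple stands for `x + y w + z w ^ 2`. -/
@[ext]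
structure MordellK where
  x : ℤ
  y : ℤ
  z : ℤ

namespace MordellK

instance : Zero MordellK := ⟨⟨0, 0, 0⟩⟩
instance : One MordellK := ⟨⟨1, 0, 0⟩⟩
instance : Add MordellK := ⟨fun u v => ⟨u.x + v.x, u.y + v.y, u.z + v.z⟩⟩
instance : Neg MordellK := ⟨fun u => ⟨-u.x, -u.y, -u.z⟩⟩
instance : Mul MordellK := ⟨fun u v =>
  ⟨u.x * v.x + 4 * (u.y * v.z + u.z * v.y),
   u.x * v.y + u.y * v.x + 3 * (u.y * v.z + u.z * v.y) + 4 * (u.z * v.z),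
   u.x * v.z + u.y * v.y + u.z * v.x + 3 * (u.z * v.z)⟩⟩

@[simp] theorem zero_x : (0 : MordellK).x = 0 := rfl
@[simp] theorem zero_y : (0 : MordellK).y = 0 := rfl
@[simp] theorem zero_z : (0 : MordellK).z = 0 := rfl
@[simp] theorem one_x : (1 : MordellK).x = 1 := rfl
@[simp] theorem one_y : (1 : MordellK).y = 0 := rfl
@[simp] theorem one_z : (1 : MordellK).z = 0 := rfl
@[simp] theorem add_x (u v : MordellK) : (u + v).x = u.x + v.x := rfl
@[simp] theorem add_y (u v : MordellK) : (u + v).y = u.y + v.y := rfl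
@[simp] theorem add_z (u v : MordellK) : (u + v).z = u.z + v.z := rfl
@[simp] theorem neg_x (u : MordellK) : (-u).x = -u.x := rfl
@[simp] theorem neg_y (u : MordellK) : (-u).y = -u.y := rfl
@[simp] theorem neg_z (u : MordellK) : (-u).z = -u.z := rfl
@[simp] theorem mul_x (u v : MordellK) :
    (u * v).x = u.x * v.x + 4 * (u.y * v.z + u.z * v.y) := rfl
@[simp] theorem mul_y (u v : MordellK) :
    (u * v).y = u.x * v.y + u.y * v.x + 3 * (u.y * v.z + u.z * v.y) + 4 * (u.z * v.z) := rfl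
@[simp] theorem mul_z (u v : MordellK) :
    (u * v).z = u.x * v.z + u.y * v.y + u.z * v.x + 3 * (u.z * v.z) := rfl

instance : CommRing MordellK where
  add_assoc u v w := by ext <;> simp <;> ring
  zero_add u := by ext <;> simp
  add_zero u := by ext <;> simp
  add_comm u v := by ext <;> simp <;> ring
  neg_add_cancel u := by ext <;> simp
  mul_assoc u v w := by ext <;> simp <;> ring
  one_mul u := by ext <;> simp
  mul_one u := by ext <;> simp
  mul_comm u v := by ext <;> simp <;> ring
  left_distrib u v w := by ext <;> simp <;> ring
  right_distrib u v w := by ext <;> simp <;> ring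
  zero_mul u := by ext <;> simp
  mul_zero u := by ext <;> simp
  nsmul := nsmulRec
  zsmul := zsmulRec

/-- integer scaling, kept explicit -/
def sc (n : ℤ) (u : MordellK) : MordellK := ⟨n * u.x, n * u.y, n * u.z⟩

/-- the norm form -/
def N (u : MordellK) : ℤ := u.x ^ 3 + 4 * u.y ^ 3 + 16 * u.z ^ 3 + 6 * u.x ^ 2 * u.z
  - 3 * u.x * u.y ^ 2 + 9 * u.x * u.z ^ 2 - 12 * u.y * u.z ^ 2 - 12 * u.x * u.y * u.z

theorem N_mul (u v : MordellK) : N (u * v) = N u * N v := by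
  simp only [N, mul_x, mul_y, mul_z]; ring

/-- the fundamental unit -/
def eta : MordellKˣ where
  val := ⟨9, 11, 5⟩
  inv := ⟨-7, 1, 1⟩
  val_inv := by ext <;> simp
  inv_val := by ext <;> simp

theorem N_one : N 1 = 1 := by simp [N]

theorem N_eta : N (eta : MordellK) = 1 := by simp [N, eta]
theorem N_eta_inv : N ((eta⁻¹ : MordellKˣ) : MordellK) = 1 := by simp [N, eta, Units.inv_mk]

/-- norm as a monoid hom -/
def NH : MordellK →* ℤ where
  toFun := N
  map_one' := N_one
  map_mul' := N_mul

theorem N_zpow (n : ℤ) : N ((eta ^ n : MordellKˣ) : MordellK) = 1 := by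
  have h : Units.map NH eta = 1 := by ext; exact N_eta
  have h2 : Units.map NH (eta ^ n) = 1 := by rw [map_zpow, h, one_zpow]
  exact congrArg Units.val h2

theorem exists_root : ∃ w : ℝ, w ^ 3 = 3 * w + 4 ∧ 2.195 ≤ w ∧ w ≤ 2.196 := by
  have hf : ContinuousOn (fun w : ℝ => w ^ 3 - 3 * w - 4) (Set.Icc 2.195 2.196) := by fun_prop
  have := intermediate_value_Icc (by norm_num) hf
  obtain ⟨w, hw, h0⟩ := this (show (0 : ℝ) ∈ _ by constructor <;> norm_num)
  exact ⟨w, by simp only at h0; linarith, hw.1, hw.2⟩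

/-- the real embedding -/
def rho (w : ℝ) (hw : w ^ 3 = 3 * w + 4) : MordellK →* ℝ where
  toFun u := u.x + u.y * w + u.z * w ^ 2
  map_one' := by simp
  map_mul' u v := by
    simp only [mul_x, mul_y, mul_z]; push_cast
    have h4 : w ^ 4 = 3 * w ^ 2 + 4 * w := by
      calc w ^ 4 = w * w ^ 3 := by ring
        _ = _ := by rw [hw]; ring
    linear_combination (-(u.y * v.z + u.z * v.y : ℝ)) * hw - (u.z * v.z : ℝ) * h4

theorem norm_factor (w : ℝ) (hw : w ^ 3 = 3 * w + 4) (x y z : ℝ) :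
    (x + y * w + z * w ^ 2) *
      ((x - y * w / 2 + z * (6 - w ^ 2) / 2) ^ 2 + (3 * w ^ 2 / 4 - 3) * (y - z * w) ^ 2) =
    x ^ 3 + 4 * y ^ 3 + 16 * z ^ 3 + 6 * x ^ 2 * z
      - 3 * x * y ^ 2 + 9 * x * z ^ 2 - 12 * y * z ^ 2 - 12 * x * y * z := by
  have h4 : w ^ 4 = 3 * w ^ 2 + 4 * w := by
    calc w ^ 4 = w * w ^ 3 := by ring
      _ = _ := by rw [hw]; ring
  have h6 : w ^ 6 = 3 * w ^ 4 + 4 * w ^ 3 := by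
    calc w ^ 6 = w ^ 3 * w ^ 3 := by ring
      _ = _ := by nth_rw 1 [hw]; ring
  ring_nf
  rw [h6, h4, hw]
  ring

theorem unit_small (w : ℝ) (hw : w ^ 3 = 3 * w + 4) (h1 : 2.195 ≤ w) (h2 : w ≤ 2.196)
    (x y z : ℤ) (hN : N ⟨x, y, z⟩ = 1) (hr1 : 1 ≤ x + y * w + z * w ^ 2)
    (hr2 : x + y * w + z * w ^ 2 < 9 + 11 * w + 5 * w ^ 2) : x = 1 ∧ y = 0 ∧ z = 0 := by
  have hsq1 : 4.818 ≤ w ^ 2 := by nlinarith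
  have hsq2 : w ^ 2 ≤ 4.823 := by nlinarith
  have hQ : (x + y * w + z * w ^ 2) *
      ((x - y * w / 2 + z * (6 - w ^ 2) / 2) ^ 2 + (3 * w ^ 2 / 4 - 3) * (y - z * w) ^ 2) = 1 := by
    have hN' : (x : ℝ) ^ 3 + 4 * y ^ 3 + 16 * z ^ 3 + 6 * x ^ 2 * z
      - 3 * x * y ^ 2 + 9 * x * z ^ 2 - 12 * y * z ^ 2 - 12 * x * y * z = 1 := by
      unfold N at hN; exact_mod_cast hN
    rw [← hN']
    exact norm_factor w hw x y z
  have hQ1 : (x - y * w / 2 + z * (6 - w ^ 2) / 2) ^ 2 + (3 * w ^ 2 / 4 - 3) * (y - z * w) ^ 2 ≤ 1 := by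
    by_contra hcon
    push Not at hcon
    nlinarith
  have hP := sq_nonneg (x - y * w / 2 + z * (6 - w ^ 2) / 2 : ℝ)
  have hE := sq_nonneg (y - z * w : ℝ)
  have hP1 : |(x - y * w / 2 + z * (6 - w ^ 2) / 2 : ℝ)| ≤ 1 := by
    rw [← sq_le_one_iff_abs_le_one]; nlinarith
  have hE1 : |(y - z * w : ℝ)| ≤ 1.3 := by
    apply abs_le_of_sq_le_sq' _ (by norm_num) |> abs_le.2
    nlinarith
  rw [abs_le] at hP1 hE1
  obtain ⟨hP1, hP2⟩ := hP1
  obtain ⟨hE1, hE2⟩ := hE1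
  have hrel : (x + y * w + z * w ^ 2 : ℝ) = (x - y * w / 2 + z * (6 - w ^ 2) / 2)
     + 1.5 * w * (y - z * w) + z * (3 * w ^ 2 - 3) := by ring
  have hz1 : z ≤ 5 := by
    by_contra hc
    have : (6 : ℝ) ≤ z := by exact_mod_cast (by omega : 6 ≤ z)
    nlinarith
  have hz0 : 0 ≤ z := by
    by_contra hc
    have : (z : ℝ) ≤ -1 := by exact_mod_cast (by omega : z ≤ -1)
    nlinarith
  have hz1' : (z : ℝ) ≤ 5 := by exact_mod_cast hz1
  have hz0' : (0 : ℝ) ≤ z := by exact_mod_cast hz0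
  have hy0 : 2 * z - 1 ≤ y := by
    have : (2 * z - 2 : ℝ) < y := by nlinarith
    have : 2 * z - 2 < y := by exact_mod_cast this
    omega
  have hy1 : y ≤ 2 * z + 2 := by
    have : (y : ℝ) < 2 * z + 3 := by nlinarith
    have : y < 2 * z + 3 := by exact_mod_cast this
    omega
  have hy0' : (2 * z - 1 : ℝ) ≤ y := by exact_mod_cast hy0
  have hy1' : (y : ℝ) ≤ 2 * z + 2 := by exact_mod_cast hy1
  have hx0 : -3 ≤ x := by
    have : (-4 : ℝ) < x := by nlinarith
    have : -4 < x := by exact_mod_cast this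
    omega
  have hx1 : x ≤ 14 := by
    have : (x : ℝ) < 15 := by nlinarith
    have : x < 15 := by exact_mod_cast this
    omega
  have hfin : ∀ z ∈ Finset.Icc (0 : ℤ) 5, ∀ k ∈ Finset.Icc (-1 : ℤ) 2, ∀ x ∈ Finset.Icc (-3 : ℤ) 14,
      N ⟨x, 2 * z + k, z⟩ = 1 → (x = 1 ∧ 2 * z + k = 0 ∧ z = 0) ∨
        (x = 9 ∧ 2 * z + k = 11 ∧ z = 5) := by
    unfold N
    decide +kernel
  obtain ⟨k, rfl⟩ : ∃ k, y = 2 * z + k := ⟨y - 2 * z, by ring⟩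
  rcases hfin z (by simp; omega) k (by simp; omega) x (by simp; omega) hN with h | h
  · exact h
  · exfalso
    obtain ⟨ha, hb, hc⟩ := h
    rw [ha, hb, hc] at hr2
    push_cast at hr2
    linarith

theorem unit_eq (u : MordellK) (hu : N u = 1) : ∃ n : ℤ, u = ((eta ^ n : MordellKˣ) : MordellK) := by
  obtain ⟨w, hw, h1, h2⟩ := exists_root
  have hsq1 : 4.818 ≤ w ^ 2 := by nlinarith
  have hsq2 : w ^ 2 ≤ 4.823 := by nlinarith
  have hpos : 0 < rho w hw u := by
    have hN' : (u.x : ℝ) ^ 3 + 4 * u.y ^ 3 + 16 * u.z ^ 3 + 6 * u.x ^ 2 * u.z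
      - 3 * u.x * u.y ^ 2 + 9 * u.x * u.z ^ 2 - 12 * u.y * u.z ^ 2 - 12 * u.x * u.y * u.z = 1 := by
      unfold N at hu; exact_mod_cast hu
    have hQ := norm_factor w hw u.x u.y u.z
    rw [hN'] at hQ
    have h0 : 0 ≤ (u.x - u.y * w / 2 + u.z * (6 - w ^ 2) / 2 : ℝ) ^ 2
        + (3 * w ^ 2 / 4 - 3) * (u.y - u.z * w) ^ 2 := by
      have : 0 ≤ 3 * w ^ 2 / 4 - 3 := by linarith
      positivity
    change 0 < (u.x + u.y * w + u.z * w ^ 2 : ℝ)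
    by_contra hc
    push Not at hc
    nlinarith
  have heta : rho w hw eta = 9 + 11 * w + 5 * w ^ 2 := by simp [rho, eta]
  have hy : 1 < rho w hw eta := by rw [heta]; linarith
  obtain ⟨n, hn1, hn2⟩ := exists_mem_Ico_zpow hpos hy
  have hz (k : ℤ) : rho w hw ((eta ^ k : MordellKˣ) : MordellK) = (rho w hw eta) ^ k := by
    have : Units.map (rho w hw) (eta ^ k) = (Units.map (rho w hw) eta) ^ k := map_zpow _ _ _
    have := congrArg Units.val this
    rw [Units.val_zpow_eq_zpow_val] at this
    exact this
  refine ⟨n, ?_⟩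
  let v : MordellK := u * ((eta ^ (-n) : MordellKˣ) : MordellK)
  have hv : N v = 1 := by rw [N_mul, hu, N_zpow]; rfl
  have hrv : rho w hw v = rho w hw u * (rho w hw eta) ^ (-n) := by rw [map_mul, hz]
  have hp : 0 < (rho w hw eta) ^ n := zpow_pos (by linarith) n
  have hp' : 0 < (rho w hw eta) ^ (-n) := zpow_pos (by linarith) _
  have hpp : (rho w hw eta) ^ n * (rho w hw eta) ^ (-n) = 1 := by
    rw [← zpow_add₀ (by linarith)]; simp
  have hv1 : 1 ≤ rho w hw v := by rw [hrv, ← hpp]; gcongr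
  have hv2 : rho w hw v < 9 + 11 * w + 5 * w ^ 2 := by
    rw [hrv, ← heta]
    calc _ < (rho w hw eta) ^ (n + 1) * (rho w hw eta) ^ (-n) := by gcongr
      _ = _ := by rw [← zpow_add₀ (by linarith)]; simp
  obtain ⟨e1, e2, e3⟩ := unit_small w hw h1 h2 v.x v.y v.z hv hv1 hv2
  have hv1 : v = 1 := by ext <;> simp [e1, e2, e3]
  have : v * ((eta ^ n : MordellKˣ) : MordellK) = u := by
    simp only [v, mul_assoc, ← Units.val_mul, ← zpow_add]; simp
  rw [← this, hv1, one_mul]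

def Good (c : ℤ) (u : MordellK) : Prop :=
  ∃ a b d : ℤ, u = ⟨1 + c * (2 * a), c * (2 * b + 1), c * (2 * d + 1)⟩

theorem good_sq (c : ℤ) (u : MordellK) (h : Good (4 * c) u) : Good (4 * c * 2) (u * u) := by
  obtain ⟨a, b, d, rfl⟩ := h
  refine ⟨a + c * (2 * a * (2 * a) + 8 * (2 * b + 1) * (2 * d + 1)),
    b + c * (2 * (2 * a) * (2 * b + 1) + 6 * (2 * b + 1) * (2 * d + 1) + 4 * (2 * d + 1) ^ 2),
    d + c * (2 * (2 * a) * (2 * d + 1) + (2 * b + 1) ^ 2 + 3 * (2 * d + 1) ^ 2), ?_⟩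
  ext <;> simp <;> ring

theorem good_mul (c : ℤ) (u v : MordellK) (hu : Good 8 u) (hv : Good (8 * c * 2) v) :
    Good 8 (v * u) := by
  obtain ⟨a, b, d, rfl⟩ := hu
  obtain ⟨a', b', d', rfl⟩ := hv
  refine ⟨a + c * (2 * a' + 8 * (2 * a * (2 * a') +
      4 * ((2 * b + 1) * (2 * d' + 1) + (2 * d + 1) * (2 * b' + 1)))),
    b + c * (2 * b' + 1 + 8 * (2 * a * (2 * b' + 1) + (2 * b + 1) * (2 * a') +
      3 * ((2 * b + 1) * (2 * d' + 1) + (2 * d + 1) * (2 * b' + 1)) +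
      4 * (2 * d + 1) * (2 * d' + 1))),
    d + c * (2 * d' + 1 + 8 * (2 * a * (2 * d' + 1) + (2 * d + 1) * (2 * a') +
      (2 * b + 1) * (2 * b' + 1) + 3 * (2 * d + 1) * (2 * d' + 1))), ?_⟩
  ext <;> simp <;> ring

theorem good_pow (T : MordellK) (hT : Good 8 T) (n : ℕ) (hn : 0 < n) :
    ∃ j : ℕ, Good (8 * 2 ^ j) (T ^ n) := by
  induction n using Nat.strong_induction_on with
  | _ n ih =>
    have hev : ∀ k, 0 < k → k < n → ∃ j : ℕ, Good (8 * 2 ^ j * 2) (T ^ (2 * k)) := by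
      intro k hk hkn
      obtain ⟨j, hj⟩ := ih k hkn hk
      refine ⟨j, ?_⟩
      have := good_sq (2 * 2 ^ j) (T ^ k) (by convert hj using 1; ring)
      rw [← pow_add, ← two_mul] at this
      convert this using 1; ring
    rcases Nat.even_or_odd' n with ⟨k, rfl | rfl⟩
    · obtain ⟨j, hj⟩ := hev k (by omega) (by omega)
      exact ⟨j + 1, by convert hj using 1; ring⟩
    · rcases Nat.eq_zero_or_pos k with rfl | hk
      · exact ⟨0, by simpa using hT⟩
      · obtain ⟨j, hj⟩ := hev k hk (by omega)
        refine ⟨0, ?_⟩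
        rw [pow_succ]
        simpa using good_mul _ _ _ hT hj

theorem eta4 : ((eta ^ 4 : MordellKˣ) : MordellK) = ⟨1708305, 2059208, 937784⟩ := by
  rw [Units.val_pow_eq_pow_val]
  ext <;> simp [eta, pow_succ]

theorem eta4_inv : (((eta ^ 4)⁻¹ : MordellKˣ) : MordellK) = ⟨3569, 184, -824⟩ := by
  rw [← inv_pow, Units.val_pow_eq_pow_val]
  ext <;> simp [eta, pow_succ, Units.inv_mk]

theorem good_zpow (q : ℤ) : (((eta ^ 4) ^ q : MordellKˣ) : MordellK) = 1 ∨
    ∃ j : ℕ, Good (8 * 2 ^ j) (((eta ^ 4) ^ q : MordellKˣ) : MordellK) := by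
  rcases lt_trichotomy q 0 with h | h | h
  · right
    obtain ⟨m, rfl⟩ : ∃ m : ℕ, q = -m := ⟨q.natAbs, by omega⟩
    rw [zpow_neg, zpow_natCast, ← inv_pow, Units.val_pow_eq_pow_val]
    apply good_pow _ _ _ (by omega)
    rw [eta4_inv]
    exact ⟨223, 11, -52, by ext <;> norm_num⟩
  · left; rw [h]; simp
  · right
    obtain ⟨m, rfl⟩ : ∃ m : ℕ, q = m := ⟨q.natAbs, by omega⟩
    rw [zpow_natCast, Units.val_pow_eq_pow_val]
    apply good_pow _ _ _ (by omega)
    rw [eta4]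
    exact ⟨106769, 128700, 58611, by ext <;> norm_num⟩

theorem skolem (u : MordellK) (hu : N u = 1) (h : u.z + 2 * u.y = 0) : u = 1 := by
  obtain ⟨n, rfl⟩ := unit_eq u hu
  have hn : n = 4 * (n / 4) + ((n % 4).toNat : ℤ) := by omega
  have hr : (n % 4).toNat < 4 := by omega
  generalize (n % 4).toNat = r at hn hr
  generalize n / 4 = q at hn
  have he : eta ^ n = (eta ^ 4) ^ q * eta ^ r := by
    rw [hn, zpow_add, zpow_mul, zpow_natCast]; norm_cast
  rw [he, Units.val_mul] at h ⊢
  rw [Units.val_pow_eq_pow_val eta r] at h ⊢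
  have h8 := good_zpow q
  generalize (((eta ^ 4) ^ q : MordellKˣ) : MordellK) = t at h h8 ⊢
  have hmod : ∃ a b d : ℤ, t = ⟨1 + 8 * a, 8 * b, 8 * d⟩ := by
    rcases h8 with rfl | ⟨j, a, b, d, rfl⟩
    · exact ⟨0, 0, 0, by ext <;> simp⟩
    · exact ⟨2 ^ j * (2 * a), 2 ^ j * (2 * b + 1), 2 ^ j * (2 * d + 1), by ext <;> simp <;> ring⟩
  interval_cases r
  · rw [pow_zero, mul_one] at h ⊢
    rcases h8 with rfl | ⟨j, a, b, d, rfl⟩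
    · rfl
    · exfalso
      simp only at h
      have h2 : (8 * 2 ^ j : ℤ) * (2 * d + 1 + 2 * (2 * b + 1)) = 0 := by linarith
      rcases mul_eq_zero.1 h2 with h3 | h3
      · have : (0 : ℤ) < 8 * 2 ^ j := by positivity
        omega
      · omega
  all_goals
    exfalso
    obtain ⟨a, b, d, rfl⟩ := hmod
    simp [eta, pow_succ] at h
    omega

/-- The Thue equation. -/
theorem thue (x z : ℤ) (h : 2 * x ^ 3 - 6 * x ^ 2 * z - 3 * x * z ^ 2 + 16 * z ^ 3 = 7) :
    x = 3 ∧ z = 1 := by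
  have h7 : (7 : ℤ) ∣ z + 2 * x := by
    have := congrArg (fun t : ℤ => (t : ZMod 7)) h
    push_cast at this
    refine (ZMod.intCast_zmod_eq_zero_iff_dvd _ 7).1 ?_
    push_cast
    generalize (x : ZMod 7) = s at this ⊢
    generalize (z : ZMod 7) = t at this ⊢
    revert this; revert s t; decide
  obtain ⟨k, hk⟩ := h7
  obtain rfl : z = 7 * k - 2 * x := by linarith
  have hN : N ⟨7 * x - 20 * k, x - 3 * k, -2 * x + 6 * k⟩ = 1 := by
    unfold N
    simp only
    linarith
  have := skolem _ hN (by simp only; ring)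
  have h1 := congrArg MordellK.x this
  have h2 := congrArg MordellK.y this
  simp at h1 h2
  omega

end MordellK

theorem mordell_cop (x : ℤ) (p : ℕ) (hp : p.Prime) (h : ¬ (p : ℤ) ∣ x) : IsCoprime x (p : ℤ) :=
  ((Nat.prime_iff_prime_int.1 hp).coprime_iff_not_dvd.2 h).symm

theorem mordell_cop14 (x : ℤ) (h2 : x % 2 = 1) (h7 : x % 7 ≠ 0) : IsCoprime x (2 * 7) := by
  apply IsCoprime.mul_right
  · exact mordell_cop x 2 (by norm_num) (by omega)
  · exact mordell_cop x 7 (by norm_num) (by omega)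

theorem mordell_cop126 (x : ℤ) (h2 : x % 2 = 1) (h3 : x % 3 ≠ 0) (h7 : x % 7 ≠ 0) :
    IsCoprime x (6 * 21) := by
  have c2 : IsCoprime x 2 := mordell_cop x 2 (by norm_num) (by omega)
  have c3 : IsCoprime x 3 := mordell_cop x 3 (by norm_num) (by omega)
  have c7 : IsCoprime x 7 := mordell_cop x 7 (by norm_num) (by omega)
  have : (6 * 21 : ℤ) = 2 * 3 * (3 * 7) := by norm_num
  rw [this]
  exact (c2.mul_right c3).mul_right (c3.mul_right c7)

theorem mordell_odd (X Y k : ℤ) (hk : k % 8 = 3 ∨ k % 8 = 5) (h : Y ^ 2 = X ^ 3 + k) :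
    X % 2 = 1 := by
  by_contra hc
  obtain ⟨x, rfl⟩ : ∃ x, X = 2 * x := ⟨X / 2, by omega⟩
  have h1 : Y ^ 2 = 8 * x ^ 3 + k := by rw [h]; ring
  have h2 : Y % 8 = 0 ∨ Y % 8 = 1 ∨ Y % 8 = 2 ∨ Y % 8 = 3 ∨ Y % 8 = 4 ∨ Y % 8 = 5 ∨
    Y % 8 = 6 ∨ Y % 8 = 7 := by omega
  have h3 : Y ^ 2 % 8 = 0 ∨ Y ^ 2 % 8 = 1 ∨ Y ^ 2 % 8 = 4 := by
    rcases h2 with h | h | h | h | h | h | h | h <;> simp [sq, Int.mul_emod, h]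
  omega

theorem mordell_three (X Y k : ℤ) (h : Y ^ 2 = X ^ 3 + 27 * k) (h3 : X % 3 = 0) :
    ∃ x y, X = 3 * x ∧ Y = 9 * y ∧ 3 * y ^ 2 = x ^ 3 + k := by
  obtain ⟨x, rfl⟩ : ∃ x, X = 3 * x := ⟨X / 3, by omega⟩
  have p3 : Prime (3 : ℤ) := Int.prime_three
  have h1 : (3 : ℤ) ∣ Y := p3.dvd_of_dvd_pow (n := 2) ⟨9 * (x ^ 3 + k), by rw [h]; ring⟩
  obtain ⟨y, rfl⟩ := h1
  have h2 : y ^ 2 = 3 * (x ^ 3 + k) := by linarith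
  have h1 : (3 : ℤ) ∣ y := p3.dvd_of_dvd_pow (n := 2) ⟨_, h2⟩
  obtain ⟨y, rfl⟩ := h1
  exact ⟨x, y, rfl, by ring, by linarith⟩

theorem mordell_seven (X Y k : ℤ) (h : Y ^ 2 = X ^ 3 + 49 * k) (h7 : X % 7 = 0) :
    ∃ x y, X = 7 * x ∧ Y = 7 * y ∧ y ^ 2 = 7 * x ^ 3 + k := by
  obtain ⟨x, rfl⟩ : ∃ x, X = 7 * x := ⟨X / 7, by omega⟩
  have p7 : Prime (7 : ℤ) := Nat.prime_iff_prime_int.1 (by norm_num)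
  have h1 : (7 : ℤ) ∣ Y := p7.dvd_of_dvd_pow (n := 2) ⟨49 * x ^ 3 + 7 * k, by rw [h]; ring⟩
  obtain ⟨y, rfl⟩ := h1
  exact ⟨x, y, rfl, rfl, by linarith⟩

theorem mordell_dvd7 (a : ℤ) (h : a ∣ 7) : a = 1 ∨ a = -1 ∨ a = 7 ∨ a = -7 := by
  have h1 := Int.le_of_dvd (by norm_num) h
  have h2 := Int.le_of_dvd (by norm_num) ((neg_dvd).2 h)
  have h3 : -7 ≤ a := by omega
  interval_cases a <;> revert h <;> decide

theorem mordell_plus (X Y : ℤ) (h : Y ^ 2 = X ^ 3 + 1323) :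
    (X = -3 ∧ Y = 36) ∨ (X = -3 ∧ Y = -36) := by
  have hodd := mordell_odd X Y 1323 (by norm_num) h
  have h7 : X % 7 ≠ 0 := by
    intro h7
    obtain ⟨x, y, -, -, h1⟩ := mordell_seven X Y 27 h h7
    have h2 : y % 7 = 0 ∨ y % 7 = 1 ∨ y % 7 = 2 ∨ y % 7 = 3 ∨ y % 7 = 4 ∨ y % 7 = 5 ∨
      y % 7 = 6 := by omega
    have h3 : y ^ 2 % 7 = 0 ∨ y ^ 2 % 7 = 1 ∨ y ^ 2 % 7 = 4 ∨ y ^ 2 % 7 = 2 := by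
      rcases h2 with h | h | h | h | h | h | h <;> simp [sq, Int.mul_emod, h]
    omega
  by_cases h3 : X % 3 = 0
  · obtain ⟨x, y, rfl, rfl, h1⟩ := mordell_three X Y 49 h h3
    have hfin : y = 4 ∨ y = -4 := by
      obtain ⟨a, b, ⟨hp, hq⟩ | ⟨hp, hq⟩ | ⟨hp, hq⟩⟩ := mordell_cube3 7 y (-x)
        (by linarith [show (-x) ^ 3 = - x ^ 3 by ring])
        (Or.inl (mordell_cop14 (-x) (by omega) (by omega)))
      · exfalso
        have ha : a ∣ 7 := ⟨a ^ 2 + 9 * b ^ 2, by rw [hp]; ring⟩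
        generalize hB : b ^ 2 = B at hp
        rcases mordell_dvd7 a ha with rfl | rfl | rfl | rfl <;> omega
      · obtain ⟨h5, h6⟩ := MordellK.thue (2 * a + b) (a + b) (by rw [hp]; ring)
        obtain rfl : a = 2 := by omega
        obtain rfl : b = -1 := by omega
        right; rw [hq]; norm_num
      · obtain ⟨h5, h6⟩ := MordellK.thue (2 * a - b) (a - b) (by rw [hp]; ring)
        obtain rfl : a = 2 := by omega
        obtain rfl : b = 1 := by omega
        left; rw [hq]; norm_num
    have hx : x ^ 3 = (-1) ^ 3 := by rcases hfin with rfl | rfl <;> linarith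
    have hx1 : x = -1 := (Odd.strictMono_pow (by decide : Odd 3)).injective hx
    omega
  · exfalso
    obtain ⟨a, b, ⟨hp, hq⟩ | ⟨hp, hq⟩ | ⟨hp, hq⟩⟩ := mordell_cube3 Y 21 X
        (by linarith) (Or.inr (mordell_cop126 X hodd h3 h7))
    · have hb : b ∣ 7 := ⟨a ^ 2 + b ^ 2, by linarith⟩
      have hsq : ∀ n : ℤ, a ^ 2 = n → n = 6 ∨ n < 0 → False := by
        rintro n hn (rfl | h)
        · have : a < 3 := by nlinarith
          have : -3 < a := by nlinarith
          interval_cases a <;> omega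
        · nlinarith
      rcases mordell_dvd7 b hb with rfl | rfl | rfl | rfl
      · exact hsq 6 (by linarith) (by norm_num)
      · nlinarith
      · nlinarith
      · nlinarith
    all_goals
      have ha : (3 : ℤ) ∣ a := by
        apply Int.prime_three.dvd_of_dvd_pow (n := 3)
        have hq' := hq
        ring_nf at hq'
        omega
      obtain ⟨c, rfl⟩ := ha
      have hY : (3 : ℤ) ∣ Y := by
        rw [hp]
        ring_nf
        omega
      obtain ⟨y, rfl⟩ := hY
      have : (3 : ℤ) ∣ X := by
        apply Int.prime_three.dvd_of_dvd_pow (n := 3)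
        exact ⟨3 * y ^ 2 - 441, by linarith⟩
      omega

theorem mordell_minus_aux (x y : ℤ) (hodd : x % 2 = 1) (h3 : x % 3 ≠ 0) (h : y ^ 2 = 7 * x ^ 3 - 27)
    (h7 : y % 7 = 6) : False := by
  obtain ⟨v, hv⟩ : ∃ v, 6 - y = 7 * v := ⟨(6 - y) / 7, by omega⟩
  obtain rfl : y = 6 - 7 * v := by linarith
  have hn : (3 - 2 * v) ^ 2 + 3 * v ^ 2 = x ^ 3 := by linarith
  have c2 : IsCoprime x 2 := mordell_cop x 2 (by norm_num) (by omega)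
  have c3 : IsCoprime x 3 := mordell_cop x 3 (by norm_num) (by omega)
  have hcv : IsCoprime x v := by
    rw [Int.isCoprime_iff_gcd_eq_one]
    by_contra hg
    obtain ⟨p, hp, hpd⟩ := Nat.exists_prime_and_dvd hg
    have hpx : (p : ℤ) ∣ x := (Int.natCast_dvd_natCast.2 hpd).trans (Int.gcd_dvd_left ..)
    have hpv : (p : ℤ) ∣ v := (Int.natCast_dvd_natCast.2 hpd).trans (Int.gcd_dvd_right ..)
    have hpp := Nat.prime_iff_prime_int.1 hp
    have h9 : (p : ℤ) ∣ 3 ^ 2 := by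
      have e : (3 : ℤ) ^ 2 = x ^ 3 - v * (7 * v - 12) := by rw [← hn]; ring
      rw [e]
      exact dvd_sub (dvd_pow hpx (by norm_num)) (hpv.mul_right _)
    exact hpp.not_isUnit (c3.isUnit_of_dvd' hpx (hpp.dvd_of_dvd_pow h9))
  have c6 : IsCoprime x (6 * v) := by
    have : (6 * v : ℤ) = 2 * 3 * v := by norm_num
    rw [this]; exact (c2.mul_right c3).mul_right hcv
  obtain ⟨a, b, hA, hB⟩ := mordell_cubeE (3 - 2 * v) v x hn hodd (Or.inr c6)
  have ha : (3 : ℤ) ∣ a := by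
    apply Int.prime_three.dvd_of_dvd_pow (n := 3)
    have hA' := hA
    have hB' := hB
    ring_nf at hA' hB'
    omega
  obtain ⟨c, rfl⟩ := ha
  have hu : (3 : ℤ) ∣ v := by rw [hB]; ring_nf; omega
  obtain ⟨t, rfl⟩ := hu
  have : (3 : ℤ) ∣ x := by
    apply Int.prime_three.dvd_of_dvd_pow (n := 3)
    exact ⟨3 * (1 - 2 * t) ^ 2 + 9 * t ^ 2, by linarith⟩
  omega

theorem mordell_minus (X Y : ℤ) (h : Y ^ 2 = X ^ 3 - 1323) : False := by
  have hodd := mordell_odd X Y (-1323) (by norm_num) h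
  by_cases h7 : X % 7 = 0
  · obtain ⟨x, y, rfl, rfl, h1⟩ := mordell_seven X Y (-27) (by linarith) h7
    by_cases h3 : x % 3 = 0
    · obtain ⟨x, rfl⟩ : ∃ t, x = 3 * t := ⟨x / 3, by omega⟩
      have p3 : Prime (3 : ℤ) := Int.prime_three
      obtain ⟨y, rfl⟩ : (3 : ℤ) ∣ y :=
        p3.dvd_of_dvd_pow (n := 2) ⟨63 * x ^ 3 - 9, by rw [h1]; ring⟩
      obtain ⟨y, rfl⟩ : (3 : ℤ) ∣ y :=
        p3.dvd_of_dvd_pow (n := 2) ⟨7 * x ^ 3 - 1, by linarith⟩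
      have h4 : 3 * y ^ 2 + 1 = 7 * x ^ 3 := by linarith
      have := congrArg (fun t : ℤ => (t : ZMod 9)) h4
      push_cast at this
      generalize (x : ZMod 9) = s at this
      generalize (y : ZMod 9) = t at this
      revert this; revert s t; decide
    · have h2 : y % 7 = 0 ∨ y % 7 = 1 ∨ y % 7 = 2 ∨ y % 7 = 3 ∨ y % 7 = 4 ∨ y % 7 = 5 ∨
        y % 7 = 6 := by omega
      have h4 : y % 7 = 1 ∨ y % 7 = 6 := by
        have h5 : y ^ 2 % 7 = 1 := by omega
        rcases h2 with h | h | h | h | h | h | h <;> simp [sq, Int.mul_emod, h] at h5 ⊢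
      rcases h4 with h4 | h4
      · exact mordell_minus_aux x (-y) (by omega) h3 (by rw [neg_sq]; linarith) (by omega)
      · exact mordell_minus_aux x y (by omega) h3 (by linarith) h4
  · by_cases h3 : X % 3 = 0
    · obtain ⟨x, y, rfl, rfl, h1⟩ := mordell_three X Y (-49) (by linarith) h3
      obtain ⟨a, b, hp, hq⟩ := mordell_cubeE 7 y x (by linarith) (by omega)
        (Or.inl (mordell_cop14 x (by omega) (by omega)))
      have ha : a ∣ 7 := ⟨a ^ 2 - 9 * b ^ 2, by rw [hp]; ring⟩
      generalize hB : b ^ 2 = B at hp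
      rcases mordell_dvd7 a ha with rfl | rfl | rfl | rfl <;> omega
    · obtain ⟨a, b, hp, hq⟩ := mordell_cubeE Y 21 X (by linarith) hodd
        (Or.inr (mordell_cop126 X hodd h3 h7))
      have hb : b ∣ 7 := ⟨a ^ 2 - b ^ 2, by linarith⟩
      have hm : a ^ 2 % 3 = 0 ∨ a ^ 2 % 3 = 1 := by
        have : a % 3 = 0 ∨ a % 3 = 1 ∨ a % 3 = 2 := by omega
        rcases this with h | h | h <;> simp [sq, Int.mul_emod, h]
      have hm : a ^ 2 % 5 = 0 ∨ a ^ 2 % 5 = 1 ∨ a ^ 2 % 5 = 4 := by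
        have : a % 5 = 0 ∨ a % 5 = 1 ∨ a % 5 = 2 ∨ a % 5 = 3 ∨ a % 5 = 4 := by omega
        rcases this with h | h | h | h | h <;> simp [sq, Int.mul_emod, h]
      rcases mordell_dvd7 b hb with rfl | rfl | rfl | rfl
      · omega
      · nlinarith
      · have : a ^ 2 = 50 := by linarith
        have : a < 8 := by nlinarith
        have : -8 < a := by nlinarith
        interval_cases a <;> omega
      · omega

theorem stmt_10 :
    (∀ X Y : ℤ, Y ^ 2 = X ^ 3 + 1323 ↔ (X = -3 ∧ Y = 36) ∨ (X = -3 ∧ Y = -36)) ∧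
    (¬ ∃ X Y : ℤ, Y ^ 2 = X ^ 3 - 1323) := by
  refine ⟨fun X Y => ⟨mordell_plus X Y, ?_⟩, ?_⟩
  · rintro (⟨rfl, rfl⟩ | ⟨rfl, rfl⟩) <;> norm_num
  · rintro ⟨X, Y, h⟩
    exact mordell_minus X Y h
end

section
/- The integral solutions (X, Y) of the Mordell equation Y^2 = X^3 − 4563 are exactly (X, Y) = (39, 234) and (X, Y) = (39, −234), and the Mordell equation Y^2 = X^3 + 4563 has no integral solutions. -/
open NumberField in
theorem eis_cube_aux (K : Type) [Field K] [NumberField K] [IsCyclotomicExtension {3} ℚ K]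
    (p q n : ℤ) (h : p^2 - p*q + q^2 = n^3) (hc : IsCoprime n (3*q)) :
    ∃ a b : ℤ, (p = a^3+b^3-3*a*b^2 ∧ q = 3*a*b*(a-b)) ∨
      (p = -(3*a*b*(a-b)) ∧ q = a^3+b^3-3*a*b^2 - 3*a*b*(a-b)) ∨
      (p = 3*a*b*(a-b) - (a^3+b^3-3*a*b^2) ∧ q = -(a^3+b^3-3*a*b^2)) := by
  have : IsPrincipalIdealRing (𝓞 K) := IsCyclotomicExtension.Rat.three_pid K
  obtain ⟨ζ, hζ⟩ : ∃ ζ : K, IsPrimitiveRoot ζ 3 :=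
    ⟨_, IsCyclotomicExtension.zeta_spec 3 ℚ K⟩
  set w : 𝓞 K := hζ.toInteger with hw
  have hw2 : w^2 + w + 1 = 0 := by
    have := IsCyclotomicExtension.Rat.Three.eta_sq_add_eta_add_one hζ
    simpa [IsCyclotomicExtension.Rat.Three.coe_eta] using this
  have hbas : ∀ x : 𝓞 K, ∃ a b : ℤ, x = a + b * w := by
    intro x
    have hd : hζ.integralPowerBasis.dim = 2 := by
      rw [hζ.integralPowerBasis_dim]; decide
    obtain ⟨f, hf, hx⟩ := hζ.integralPowerBasis.exists_eq_aeval x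
    rw [hd] at hf
    rw [hζ.integralPowerBasis_gen] at hx
    obtain ⟨b, a, hba⟩ := Polynomial.exists_eq_X_add_C_of_natDegree_le_one (p := f) (by omega)
    refine ⟨a, b, ?_⟩
    rw [hx, hba]
    simp [hw, add_comm]
  have huniq : ∀ c d : ℤ, (c : 𝓞 K) + d * w = 0 → c = 0 ∧ d = 0 := by
    intro c d hcd
    have h1 : ((c^2 - c*d + d^2 : ℤ) : 𝓞 K) = 0 := by
      push_cast
      linear_combination (c - d - d*w) * hcd + d^2 * hw2
    have h2 : c^2 - c*d + d^2 = 0 := by exact_mod_cast h1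
    constructor <;> nlinarith [sq_nonneg (2*c-d), sq_nonneg (2*d-c), sq_nonneg c, sq_nonneg d]
  obtain ⟨r, s, hrs⟩ := hc
  have hcop : IsCoprime ((p:𝓞 K) + q*w) ((p:𝓞 K) - q - q*w) := by
    have hrs' : IsCoprime (n^3) ((3*q)^2) := IsCoprime.pow ⟨r, s, hrs⟩
    obtain ⟨r, s, hrs⟩ := hrs'
    have hrs2 : (r:𝓞 K) * n^3 + s * (3*q)^2 = 1 := by exact_mod_cast hrs
    have h' : (p:𝓞 K)^2 - p*q + q^2 = n^3 := by exact_mod_cast h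
    refine ⟨r * (p - q - q*w) - 3 * s * q * (1+2*w), 3 * s * q * (1+2*w), ?_⟩
    linear_combination hrs2 + r * h' - (r * q^2 + 12 * s * q^2) * hw2
  have hprod : ((p:𝓞 K) + q*w) * ((p:𝓞 K) - q - q*w) = (n:𝓞 K)^3 := by
    have h' : (p:𝓞 K)^2 - p*q + q^2 = n^3 := by exact_mod_cast h
    linear_combination h' - q^2 * hw2
  obtain ⟨d, u, hu⟩ := exists_associated_pow_of_mul_eq_pow' hcop hprod
  obtain ⟨a, b, rfl⟩ := hbas d
  have hmem := IsCyclotomicExtension.Rat.Three.Units.mem hζ u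
  have hcub : ((a:𝓞 K) + b*w)^3 = ((a^3+b^3-3*a*b^2 : ℤ) : 𝓞 K) + ((3*a*b*(a-b) : ℤ) : 𝓞 K) * w := by
    push_cast
    linear_combination (3*a*b^2 + b^3*(w-1)) * hw2
  rw [hcub] at hu
  set P := a^3+b^3-3*a*b^2 with hP
  set Q := 3*a*b*(a-b) with hQ
  have hneg : (-a)^3+(-b)^3-3*(-a)*(-b)^2 = -P := by rw [hP]; ring
  have hneg' : 3*(-a)*(-b)*(-a-(-b)) = -Q := by rw [hQ]; ring
  simp only [List.mem_cons, List.not_mem_nil, or_false] at hmem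
  rcases hmem with h0 | h0 | h0 | h0 | h0 | h0 <;> rw [h0] at hu
  · refine ⟨a, b, Or.inl ?_⟩
    have := huniq (p - P) (q - Q) (by push_cast; simp at hu; linear_combination -hu)
    omega
  · refine ⟨-a, -b, Or.inl ?_⟩
    rw [hneg, hneg']
    have := huniq (p + P) (q + Q) (by push_cast; simp at hu; linear_combination -hu)
    omega
  · refine ⟨a, b, Or.inr (Or.inl ?_)⟩
    simp only [IsCyclotomicExtension.Rat.Three.coe_eta, ← hw] at hu
    have := huniq (p + Q) (q - P + Q) (by push_cast; linear_combination -hu + Q*hw2)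
    omega
  · refine ⟨-a, -b, Or.inr (Or.inl ?_)⟩
    rw [hneg, hneg']
    simp only [Units.val_neg, IsCyclotomicExtension.Rat.Three.coe_eta, ← hw] at hu
    have := huniq (p - Q) (q + P - Q) (by push_cast; linear_combination -hu - Q*hw2)
    omega
  · refine ⟨a, b, Or.inr (Or.inr ?_)⟩
    simp only [Units.val_pow_eq_pow_val, IsCyclotomicExtension.Rat.Three.coe_eta, ← hw] at hu
    have := huniq (p + P - Q) (q + P) (by push_cast; linear_combination -hu + (P + Q * (w-1))*hw2)
    omega
  · refine ⟨-a, -b, Or.inr (Or.inr ?_)⟩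
    rw [hneg, hneg']
    simp only [Units.val_neg, Units.val_pow_eq_pow_val, IsCyclotomicExtension.Rat.Three.coe_eta, ← hw] at hu
    have := huniq (p - P + Q) (q - P) (by push_cast; linear_combination -hu - (P + Q * (w-1))*hw2)
    omega

theorem eis_cube (p q n : ℤ) (h : p^2 - p*q + q^2 = n^3) (hc : IsCoprime n (3*q)) :
    ∃ a b : ℤ, (p = a^3+b^3-3*a*b^2 ∧ q = 3*a*b*(a-b)) ∨
      (p = -(3*a*b*(a-b)) ∧ q = a^3+b^3-3*a*b^2 - 3*a*b*(a-b)) ∨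
      (p = 3*a*b*(a-b) - (a^3+b^3-3*a*b^2) ∧ q = -(a^3+b^3-3*a*b^2)) := by
  have : NeZero ((3:ℕ):ℚ) := ⟨by norm_num⟩
  have h1 := CyclotomicField.isCyclotomicExtension 3 ℚ
  have h2 : (DivisionRing.toRatAlgebra : Algebra ℚ (CyclotomicField 3 ℚ)) =
      CyclotomicField.algebra 3 ℚ := Subsingleton.elim _ _
  have : @IsCyclotomicExtension {3} ℚ (CyclotomicField 3 ℚ) _ _ DivisionRing.toRatAlgebra := by
    rw [h2]; exact h1
  exact eis_cube_aux (CyclotomicField 3 ℚ) p q n h hc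

theorem prod3_ne (p q : ℤ) (h : p*q*(p-q) = 26) : False := by
  have hp : p ∣ 26 := ⟨q*(p-q), by linarith⟩
  have hq : q ∣ 26 := ⟨p*(p-q), by linarith⟩
  have h1 := Int.le_of_dvd (by norm_num) hp
  have h2 := Int.le_of_dvd (by norm_num) hq
  have h3 := Int.le_of_dvd (by norm_num) ((neg_dvd).2 hp)
  have h4 := Int.le_of_dvd (by norm_num) ((neg_dvd).2 hq)
  have h5 : -26 ≤ p := by linarith
  have h6 : -26 ≤ q := by linarith
  clear h3 h4
  interval_cases p <;> first | omega | (exfalso; revert hp; decide) | (interval_cases q <;> omega)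

theorem eis_odd (p q n : ℤ) (h : p^2 - p*q + q^2 = n^3) (hc : IsCoprime n (3*q))
    (hp : p % 2 = 1) (hq : q % 2 = 0) :
    ∃ a b : ℤ, p = a^3+b^3-3*a*b^2 ∧ q = 3*a*b*(a-b) := by
  obtain ⟨a, b, h1 | ⟨h1, h2⟩ | ⟨h1, h2⟩⟩ := eis_cube p q n h hc
  · exact ⟨a, b, h1⟩
  · exfalso
    have : (3*a*b*(a-b)) % 2 = 0 := by
      rcases Int.emod_two_eq_zero_or_one a with ha | ha <;>
      rcases Int.emod_two_eq_zero_or_one b with hb | hb <;>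
      simp [Int.mul_emod, Int.sub_emod, ha, hb]
    omega
  · exfalso
    have : (3*a*b*(a-b)) % 2 = 0 := by
      rcases Int.emod_two_eq_zero_or_one a with ha | ha <;>
      rcases Int.emod_two_eq_zero_or_one b with hb | hb <;>
      simp [Int.mul_emod, Int.sub_emod, ha, hb]
    omega

theorem coprime_of_primes (n m : ℤ) (h : ∀ l : ℕ, l.Prime → (l:ℤ) ∣ n → (l:ℤ) ∣ m → False) :
    IsCoprime n m := by
  rw [Int.isCoprime_iff_gcd_eq_one]
  by_contra hne
  obtain ⟨l, hl, hd⟩ := Nat.exists_prime_and_dvd hne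
  rw [Int.gcd_eq_natAbs] at hd
  have h1 : (l:ℤ) ∣ n := by
    rw [Int.natCast_dvd]; exact hd.trans (Nat.gcd_dvd_left _ _)
  have h2 : (l:ℤ) ∣ m := by
    rw [Int.natCast_dvd]; exact hd.trans (Nat.gcd_dvd_right _ _)
  exact h l hl h1 h2

theorem prime_dvd_cases (l : ℕ) (hl : l.Prime) (a : ℕ) (p : ℕ) (k : ℕ) (hp : p.Prime)
    (h : (l:ℤ) ∣ (p:ℤ)^k) : l = p := by
  have h1 : (l:ℤ) ∣ p := (Nat.prime_iff_prime_int.1 hl).dvd_of_dvd_pow h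
  have h2 : l ∣ p := by exact_mod_cast h1
  exact (Nat.prime_dvd_prime_iff_eq hl hp).1 h2

theorem parity1 (X Y : ℤ) (h : Y^2 = X^3 - 4563) : Y % 2 = 0 ∧ X % 2 = 1 := by
  have h8 : Y^2 % 8 = (X^3 - 4563) % 8 := by rw [h]
  have hY : Y % 8 = 0 ∨ Y % 8 = 1 ∨ Y % 8 = 2 ∨ Y % 8 = 3 ∨ Y % 8 = 4 ∨ Y % 8 = 5 ∨ Y % 8 = 6 ∨ Y % 8 = 7 := by omega
  have hX : X % 8 = 0 ∨ X % 8 = 1 ∨ X % 8 = 2 ∨ X % 8 = 3 ∨ X % 8 = 4 ∨ X % 8 = 5 ∨ X % 8 = 6 ∨ X % 8 = 7 := by omega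
  rcases hY with hY | hY | hY | hY | hY | hY | hY | hY <;>
  rcases hX with hX | hX | hX | hX | hX | hX | hX | hX <;>
  simp [pow_succ, Int.mul_emod, Int.sub_emod, hX, hY] at h8 <;> omega

theorem case1 (X Y : ℤ) (h : Y^2 = X^3 - 4563) (h3 : ¬ (3:ℤ) ∣ X) (h13 : ¬ (13:ℤ) ∣ X) : False := by
  obtain ⟨hY, hX⟩ := parity1 X Y h
  obtain ⟨a, b, h1, h2⟩ := eis_odd (Y+39) 78 X (by linarith) (by
    apply coprime_of_primes
    intro l hl hn hm
    have : (l:ℤ) ∣ 2 * 3^2 * 13 := by norm_num at hm ⊢; exact hm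
    have hp := Nat.prime_iff_prime_int.1 hl
    rcases hp.dvd_or_dvd this with h | h
    · rcases hp.dvd_or_dvd h with h | h
      · have := prime_dvd_cases l hl 0 2 1 Nat.prime_two (by simpa using h)
        subst this; omega
      · have := prime_dvd_cases l hl 0 3 2 Nat.prime_three (by simpa using h)
        subst this; exact h3 hn
    · have := prime_dvd_cases l hl 0 13 1 (by norm_num) (by simpa using h)
      subst this; exact h13 hn) (by omega) (by norm_num)
  exact prod3_ne a b (by linarith)

theorem case2 (X y : ℤ) (h : 3*y^2+169 = X^3) (hy : y % 2 = 0) (h13 : ¬ (13:ℤ) ∣ X) : False := by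
  have hX : X % 2 = 1 := by
    have : (3*y^2+169) % 2 = X^3 % 2 := by rw [h]
    rcases Int.emod_two_eq_zero_or_one X with hx | hx
    · simp [pow_succ, Int.mul_emod, Int.add_emod, hx, hy] at this
    · exact hx
  obtain ⟨a, b, h1, h2⟩ := eis_odd (13+y) (2*y) X (by linarith) (by
    apply coprime_of_primes
    intro l hl hn hm
    have hp := Nat.prime_iff_prime_int.1 hl
    have hn3 : (l:ℤ) ∣ X^3 := dvd_pow hn (by norm_num)
    have : (l:ℤ) ∣ 2 * (3*y) := by convert hm using 1; ring
    have key : (l:ℤ) ∣ 3*y → l = 13 := by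
      intro hd
      have h5 : (l:ℤ) ∣ 13^2 := by
        have : (13:ℤ)^2 = X^3 - (3*y)*y := by linarith
        rw [this]; exact dvd_sub hn3 (hd.mul_right y)
      exact prime_dvd_cases l hl 0 13 2 (by norm_num) (by simpa using h5)
    rcases hp.dvd_or_dvd this with h | h
    · have := prime_dvd_cases l hl 0 2 1 Nat.prime_two (by simpa using h)
      subst this; omega
    · have := key h
      subst this; exact h13 hn) (by omega) (by omega)
  exact prod3_ne (2*a-b) (a+b) (by linarith)

theorem case3 (x y : ℤ) (h : y^2+27 = 13*x^3) (hy : y % 2 = 0) (h3 : ¬ (3:ℤ) ∣ x) : False := by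
  have hx : x % 2 = 1 := by
    have : (y^2+27) % 2 = (13*x^3) % 2 := by rw [h]
    rcases Int.emod_two_eq_zero_or_one x with hx | hx
    · simp [pow_succ, Int.mul_emod, Int.add_emod, hx, hy] at this
    · exact hx
  have h5 : y % 13 = 5 ∨ y % 13 = 8 := by
    have h13 : (y^2+27) % 13 = (13*x^3) % 13 := by rw [h]
    have hy' : 0 ≤ y % 13 ∧ y % 13 < 13 := by omega
    obtain ⟨u, hu⟩ : ∃ u, u = y % 13 := ⟨_, rfl⟩
    simp [pow_succ, Int.mul_emod, Int.add_emod] at h13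
    rw [← hu] at h13 hy' ⊢
    obtain ⟨h1, h2⟩ := hy'
    interval_cases u <;> omega
  have main : ∀ y : ℤ, y^2+27 = 13*x^3 → y % 2 = 0 → y % 13 = 5 → False := by
    intro y h hy h5
    obtain ⟨k, hk⟩ : ∃ k, y = 26*k + 18 := ⟨(y-18)/26, by omega⟩
    have hxk : (-3 - 6*k)^2 - (-3-6*k)*(-6-8*k) + (-6-8*k)^2 = x^3 := by
      rw [hk] at h; linarith
    obtain ⟨a, b, h1, h2⟩ := eis_odd (-3-6*k) (-6-8*k) x hxk (by
      apply coprime_of_primes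
      intro l hl hn hm
      have hp := Nat.prime_iff_prime_int.1 hl
      rcases hp.dvd_or_dvd hm with h | h
      · have := prime_dvd_cases l hl 0 3 1 Nat.prime_three (by simpa using h)
        subst this; exact h3 hn
      · have hn3 : (l:ℤ) ∣ x^3 := dvd_pow hn (by norm_num)
        have h6 : (l:ℤ) ∣ (-3-6*k)^2 := by
          have : (-3-6*k)^2 = x^3 - (-6-8*k)*((-6-8*k)-(-3-6*k)) := by linarith
          rw [this]; exact dvd_sub hn3 (h.mul_right _)
        have h7 := hp.dvd_of_dvd_pow h6
        have h8 : (l:ℤ) ∣ 2*3 := by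
          have : (2*3:ℤ) = 4*(-3-6*k) - 3*(-6-8*k) := by ring
          rw [this]; exact dvd_sub (h7.mul_left _) (h.mul_left _)
        rcases hp.dvd_or_dvd h8 with h | h
        · have := prime_dvd_cases l hl 0 2 1 Nat.prime_two (by simpa using h)
          subst this; omega
        · have := prime_dvd_cases l hl 0 3 1 Nat.prime_three (by simpa using h)
          subst this; exact h3 hn) (by omega) (by omega)
    have hab : (a+b) % 3 = 0 := by
      have : (a^3+b^3-3*a*b^2) % 3 = 0 := by omega
      have ha : a % 3 = 0 ∨ a % 3 = 1 ∨ a % 3 = 2 := by omega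
      have hb : b % 3 = 0 ∨ b % 3 = 1 ∨ b % 3 = 2 := by omega
      rcases ha with ha | ha | ha <;> rcases hb with hb | hb | hb <;>
      simp [pow_succ, Int.mul_emod, Int.sub_emod, Int.add_emod, ha, hb] at this ⊢
    obtain ⟨j, hj⟩ : ∃ j, a = 3*j - b := ⟨(a+b)/3, by omega⟩
    rw [hj] at h1 h2
    have e1 : -1 - 2*k = b^3 + 3*(3*j^3 - 3*j^2*b) := by linarith
    have e2 : -6-8*k = 6*b^3 + 9*(3*j^2*b-3*j*b^2) := by linarith
    have e3 : k % 3 = 0 := by omega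
    have hk3 : (3:ℤ) ∣ y := by omega
    have : (3:ℤ) ∣ 13*x^3 := by rw [← h]; exact dvd_add (dvd_pow hk3 (by norm_num)) (by norm_num)
    have h3p : Prime (3:ℤ) := Int.prime_three
    rcases h3p.dvd_or_dvd this with h' | h'
    · norm_num at h'
    · exact h3 (h3p.dvd_of_dvd_pow h')
  rcases h5 with h5 | h5
  · exact main y h hy h5
  · exact main (-y) (by linarith [neg_sq y]) (by omega) (by omega)

theorem desc1 (X Y : ℤ) (h : Y^2 = X^3 - 4563) :
    ∃ x z : ℤ, X = 39*x ∧ Y = 117*z ∧ 3*z^2+1 = 13*x^3 := by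
  obtain ⟨hY, hX⟩ := parity1 X Y h
  have p3 : Prime (3:ℤ) := Int.prime_three
  have p13 : Prime (13:ℤ) := by rw [Int.prime_iff_natAbs_prime]; norm_num
  by_cases h3 : (3:ℤ) ∣ X
  · obtain ⟨X', rfl⟩ := h3
    obtain ⟨Y1, rfl⟩ : (3:ℤ) ∣ Y := p3.dvd_of_dvd_pow (n := 2) ⟨9*X'^3 - 1521, by linarith⟩
    obtain ⟨y, rfl⟩ : (3:ℤ) ∣ Y1 := p3.dvd_of_dvd_pow (n := 2) ⟨X'^3 - 169, by linarith⟩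
    by_cases h13 : (13:ℤ) ∣ X'
    · obtain ⟨x, rfl⟩ := h13
      have : (13:ℤ) ∣ 3*y^2 := ⟨169*x^3-13, by linarith⟩
      obtain ⟨z, rfl⟩ : (13:ℤ) ∣ y := by
        rcases p13.dvd_or_dvd this with h' | h'
        · norm_num at h'
        · exact p13.dvd_of_dvd_pow h'
      exact ⟨x, z, by ring, by ring, by linarith⟩
    · exact (case2 X' y (by linarith) (by omega) h13).elim
  · by_cases h13 : (13:ℤ) ∣ X
    · obtain ⟨x, rfl⟩ := h13
      obtain ⟨y, rfl⟩ : (13:ℤ) ∣ Y := p13.dvd_of_dvd_pow (n := 2) ⟨169*x^3-351, by linarith⟩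
      exact (case3 x y (by linarith) (by omega) (fun h' => h3 (h'.mul_left _))).elim
    · exact (case1 X Y h h3 h13).elim

/-- The order `ℤ + ℤ f + ℤ f²/3 + ℤ f³/39` as a subring. -/
def ordR {K : Type*} [Field K] [CharZero K] (f : K)
    (hf : f^4 - 234*f^2 + 1872*f - 4563 = 0) : Subring K where
  carrier := {x | ∃ a b c d : ℤ, x = a + b*f + c*(f^2/3) + d*(f^3/39)}
  mul_mem' := by
    rintro x y ⟨a, b, c, d, rfl⟩ ⟨a', b', c', d', rfl⟩
    refine ⟨a*a' + 117*(b*d'+d*b') + 507*(c*c') + 702*(d*d'),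
      a*b' + b*a' - 48*(b*d'+d*b') - 208*(c*c') + 39*(c*d'+d*c') - 288*(d*d'),
      a*c' + c*a' + 3*(b*b') + 18*(b*d'+d*b') + 78*(c*c') - 48*(c*d'+d*c') + 117*(d*d'),
      a*d' + d*a' + 13*(b*c'+c*b') + 78*(c*d'+d*c') - 48*(d*d'), ?_⟩
    push_cast
    linear_combination ((b*d'+d*b':K)/39 + c*c'/9 + (c*d'+d*c')*f/117 + d*d'*(f^2+234)/1521)*hf
  one_mem' := ⟨1, 0, 0, 0, by simp⟩
  add_mem' := by
    rintro x y ⟨a, b, c, d, rfl⟩ ⟨a', b', c', d', rfl⟩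
    exact ⟨a+a', b+b', c+c', d+d', by push_cast; ring⟩
  zero_mem' := ⟨0, 0, 0, 0, by simp⟩
  neg_mem' := by
    rintro x ⟨a, b, c, d, rfl⟩
    exact ⟨-a, -b, -c, -d, by push_cast; ring⟩

theorem pow_two_pow_form {K : Type*} [Field K] (R : Subring K) (a : K) (ha : a ∈ R) (v : ℕ) :
    ∃ r ∈ R, (1+4*a)^(2^v) = 1 + 2^(v+2)*(a + 2*r) := by
  induction v with
  | zero => exact ⟨0, R.zero_mem, by norm_num⟩
  | succ v ih =>
    obtain ⟨r, hr, h⟩ := ih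
    refine ⟨r + 2^v * (a+2*r)^2, ?_, ?_⟩
    · have h2 : (2:K) ∈ R := by exact_mod_cast natCast_mem R 2
      exact R.add_mem hr (R.mul_mem (R.pow_mem h2 _) (R.pow_mem (R.add_mem ha (R.mul_mem h2 hr)) _))
    · rw [pow_succ, pow_mul, h]; ring

theorem pow_form {K : Type*} [Field K] (R : Subring K) (a : K) (ha : a ∈ R) (v n : ℕ) :
    ∃ r ∈ R, (1+4*a)^(2^v*n) = 1 + 2^(v+2)*(n*a + 2*r) := by
  have h2 : (2:K) ∈ R := by exact_mod_cast natCast_mem R 2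
  obtain ⟨r, hr, h⟩ := pow_two_pow_form R a ha v
  have hc : a + 2*r ∈ R := R.add_mem ha (R.mul_mem h2 hr)
  induction n with
  | zero => exact ⟨0, R.zero_mem, by simp⟩
  | succ n ih =>
    obtain ⟨r', hr', h'⟩ := ih
    refine ⟨r' + r + 2^(v+1) * ((n*a+2*r')*(a+2*r)), ?_, ?_⟩
    · exact R.add_mem (R.add_mem hr' hr) (R.mul_mem (R.pow_mem h2 _)
        (R.mul_mem (R.add_mem (R.mul_mem (natCast_mem R n) ha) (R.mul_mem h2 hr')) hc))
    · rw [mul_add, mul_one, pow_add, h', h]; push_cast; ring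

theorem u_pow_two {K : Type*} [Field K] (R : Subring K) (f : K) (hfR : f ∈ R) (m b' : ℤ)
    (hm : Odd m) (hb : Odd b') (g : ℕ) (hg : 2 ≤ g) (t : ℕ) :
    ∃ M n : ℤ, ∃ r ∈ R, Odd M ∧ Odd n ∧
      ((m:K) - 2^g*b'*f)^(2^t) = M + 2^(g+t)*(n*f + 2*r) := by
  have h2 : (2:K) ∈ R := by exact_mod_cast natCast_mem R 2
  induction t with
  | zero => exact ⟨m, -b', 0, R.zero_mem, hm, hb.neg, by push_cast; ring⟩
  | succ t ih =>
    obtain ⟨M, n, r, hr, hM, hn, h⟩ := ih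
    obtain ⟨e, rfl⟩ : ∃ e, g = e + 2 := ⟨g-2, by omega⟩
    refine ⟨M^2, M*n, M*r + 2^(e+t)*(n*f+2*r)^2, ?_, hM.pow, hM.mul hn, ?_⟩
    · exact R.add_mem (R.mul_mem (intCast_mem R M) hr) (R.mul_mem (R.pow_mem h2 _)
        (R.pow_mem (R.add_mem (R.mul_mem (intCast_mem R n) hfR) (R.mul_mem h2 hr)) _))
    · rw [pow_succ 2 t, pow_mul, h]; push_cast; ring

theorem u_pow {K : Type*} [Field K] (R : Subring K) (f : K) (hfR : f ∈ R) (M n : ℤ)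
    (hM : Odd M) (hn : Odd n) (g : ℕ) (hg : 1 ≤ g) (r : K) (hr : r ∈ R) (k : ℕ) :
    ∃ M' n' : ℤ, ∃ r' ∈ R, Odd M' ∧ (Odd n' ↔ Odd k) ∧
      ((M:K) + 2^g*(n*f+2*r))^k = M' + 2^g*(n'*f + 2*r') := by
  have h2 : (2:K) ∈ R := by exact_mod_cast natCast_mem R 2
  have hc : (n*f+2*r) ∈ R := R.add_mem (R.mul_mem (intCast_mem R n) hfR) (R.mul_mem h2 hr)
  induction k with
  | zero => exact ⟨1, 0, 0, R.zero_mem, odd_one, by simp, by simp⟩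
  | succ k ih =>
    obtain ⟨M', n', r', hr', hM', hn', h⟩ := ih
    obtain ⟨e, rfl⟩ : ∃ e, g = e + 1 := ⟨g-1, by omega⟩
    refine ⟨M*M', n'*M + n*M', M'*r + M*r' + 2^e*((n*f+2*r)*(n'*f+2*r')), ?_, hM.mul hM', ?_, ?_⟩
    · exact R.add_mem (R.add_mem (R.mul_mem (intCast_mem R M') hr) (R.mul_mem (intCast_mem R M) hr'))
        (R.mul_mem (R.pow_mem h2 _) (R.mul_mem hc
          (R.add_mem (R.mul_mem (intCast_mem R n') hfR) (R.mul_mem h2 hr'))))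
    · have hMM : Odd (n*M') := hn.mul hM'
      rw [Int.odd_add, Int.odd_mul]
      simp only [hM, and_true, hn', Nat.odd_add_one]
      rw [← Int.not_odd_iff_even]
      simp only [hMM, not_true_eq_false, iff_false]
    · rw [pow_succ, h]; push_cast; ring

/-- Combination of the `2`-adic expansions. -/
theorem skolem_nat {K : Type*} [Field K] [CharZero K] (f : K)
    (hf : f^4 - 234*f^2 + 1872*f - 4563 = 0)
    (hind : ∀ a b c d : ℤ, (a:K) + b*f + c*(f^2/3) + d*(f^3/39) = 0 → b = 0 ∧ c = 0 ∧ d = 0)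
    (m b : ℤ) (hm : Odd m) (hb : 4 ∣ b) (hb0 : b ≠ 0)
    (A1 A2 : K) (c1 c2 : ℤ) (r1 r2 : K) (hr1 : r1 ∈ ordR f hf) (hr2 : r2 ∈ ordR f hf)
    (h1 : A1 = c1 + f + f^3/39 + 2*r1) (h2 : A2 = c2 + f^2/3 + 2*r2)
    (k i j : ℕ) (h : ((m:K) - b*f)^k = (1+4*A1)^i*(1+4*A2)^j) : k = 0 ∧ i = 0 ∧ j = 0 := by
  set R := ordR f hf with hR
  have t2 : (2:K) ∈ R := by exact_mod_cast natCast_mem R 2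
  have hfR : f ∈ R := ⟨0, 1, 0, 0, by simp⟩
  have hpsi : f^2/3 ∈ R := ⟨0, 0, 1, 0, by simp⟩
  have hchi : f^3/39 ∈ R := ⟨0, 0, 0, 1, by simp⟩
  have hA1 : A1 ∈ R := by
    rw [h1]; exact R.add_mem (R.add_mem (R.add_mem (intCast_mem R _) hfR) hchi) (R.mul_mem t2 hr1)
  have hA2 : A2 ∈ R := by
    rw [h2]; exact R.add_mem (R.add_mem (intCast_mem R _) hpsi) (R.mul_mem t2 hr2)
  have left : k ≠ 0 → ∃ M n : ℤ, ∃ r ∈ R, ∃ g : ℕ, Odd n ∧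
      ((m:K) - b*f)^k = M + 2^g*(n*f + 2*r) := by
    intro hk
    obtain ⟨t, k', hk', hkk⟩ := Nat.exists_eq_two_pow_mul_odd hk
    obtain ⟨g, b', hb', hbb⟩ : ∃ g : ℕ, ∃ b' : ℤ, Odd b' ∧ b = 2^g*b' := by
      obtain ⟨g, b', hb', hbb⟩ := Nat.exists_eq_two_pow_mul_odd (n := b.natAbs) (by simpa using hb0)
      rcases Int.natAbs_eq b with hh | hh
      · exact ⟨g, b', by exact_mod_cast hb', by rw [hh, hbb]; push_cast; ring⟩
      · exact ⟨g, -b', by rw [odd_neg]; exact_mod_cast hb', by rw [hh, hbb]; push_cast; ring⟩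
    have hg : 2 ≤ g := by
      by_contra hlt
      obtain ⟨q, hq⟩ := hb'
      have : g = 0 ∨ g = 1 := by omega
      rcases this with rfl | rfl <;> simp at hbb <;> omega
    obtain ⟨M, n, r, hr, hM, hn, e⟩ := u_pow_two R f hfR m b' hm hb' g hg t
    obtain ⟨M', n', r', hr', hM', hn', e'⟩ := u_pow R f hfR M n hM hn (g+t) (by omega) r hr k'
    refine ⟨M', n', r', hr', g+t, hn'.2 hk', ?_⟩
    rw [← e', ← e, ← pow_mul, hkk, hbb]; push_cast; rfl
  have right : (i ≠ 0 ∨ j ≠ 0) → ∃ c i' j' : ℤ, ∃ r ∈ R, ∃ s : ℕ, (Odd i' ∨ Odd j') ∧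
      (1+4*A1)^i*(1+4*A2)^j = 1 + 2^s*(c + i'*(f+f^3/39) + j'*(f^2/3) + 2*r) := by
    intro hij
    obtain ⟨v, i', j', hi, hj, hodd⟩ : ∃ v i' j' : ℕ, i = 2^v*i' ∧ j = 2^v*j' ∧ (Odd i' ∨ Odd j') := by
      rcases Nat.eq_zero_or_pos i with hi | hi
      · obtain ⟨t, k', hk', hkk⟩ := Nat.exists_eq_two_pow_mul_odd (n := j) (by omega)
        exact ⟨t, 0, k', by simp [hi], hkk, Or.inr hk'⟩
      rcases Nat.eq_zero_or_pos j with hj | hj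
      · obtain ⟨t, k', hk', hkk⟩ := Nat.exists_eq_two_pow_mul_odd (n := i) (by omega)
        exact ⟨t, k', 0, hkk, by simp [hj], Or.inl hk'⟩
      obtain ⟨t, k', hk', hkk⟩ := Nat.exists_eq_two_pow_mul_odd (n := j) (by omega)
      obtain ⟨t2, k2, hk2, hkk2⟩ := Nat.exists_eq_two_pow_mul_odd (n := i) (by omega)
      rcases le_total t t2 with hle | hle
      · obtain ⟨e, rfl⟩ := Nat.exists_eq_add_of_le hle
        exact ⟨t, 2^e*k2, k', by rw [hkk2]; ring, hkk, Or.inr hk'⟩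
      · obtain ⟨e, rfl⟩ := Nat.exists_eq_add_of_le hle
        exact ⟨t2, k2, 2^e*k', hkk2, by rw [hkk]; ring, Or.inl hk2⟩
    obtain ⟨s1, hs1, e1⟩ := pow_form R A1 hA1 v i'
    obtain ⟨s2, hs2, e2⟩ := pow_form R A2 hA2 v j'
    refine ⟨i'*c1 + j'*c2, i', j', i'*r1 + j'*r2 + s1 + s2 + 2^(v+1)*((i'*A1+2*s1)*(j'*A2+2*s2)), ?_, v+2,
      by exact_mod_cast hodd, ?_⟩
    · have ni := natCast_mem R i'
      have nj := natCast_mem R j'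
      exact R.add_mem (R.add_mem (R.add_mem (R.add_mem (R.mul_mem ni hr1) (R.mul_mem nj hr2)) hs1) hs2)
        (R.mul_mem (R.pow_mem t2 _) (R.mul_mem (R.add_mem (R.mul_mem ni hA1) (R.mul_mem t2 hs1))
          (R.add_mem (R.mul_mem nj hA2) (R.mul_mem t2 hs2))))
    · rw [hi, hj, e1, e2]; push_cast
      have e3 : (1 + 2^(v+2)*((i':K)*A1+2*s1))*(1+2^(v+2)*((j':K)*A2+2*s2)) =
        1 + 2^(v+2)*((i'*A1+2*s1) + (j'*A2+2*s2) + 2*(2^(v+1)*((i'*A1+2*s1)*(j'*A2+2*s2)))) := by ring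
      rw [e3]
      linear_combination 2^(v+2)*((i':K)*h1 + j'*h2)
  by_cases hk : k = 0
  · by_cases hij : i ≠ 0 ∨ j ≠ 0
    · exfalso
      obtain ⟨c, i', j', r, ⟨x0, x1, x2, x3, rfl⟩, s, hodd, e⟩ := right hij
      rw [← h, hk, pow_zero] at e
      have h0 : ((c:K) + i'*(f+f^3/39) + j'*(f^2/3) + 2*(x0 + x1*f + x2*(f^2/3) + x3*(f^3/39))) = 0 := by
        have h2s : (2:K)^s ≠ 0 := pow_ne_zero _ two_ne_zero
        have : (2:K)^s * ((c:K) + i'*(f+f^3/39) + j'*(f^2/3) + 2*(x0 + x1*f + x2*(f^2/3) + x3*(f^3/39))) = 0 := by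
          linear_combination -e
        exact (mul_eq_zero.1 this).resolve_left h2s
      have := hind (c+2*x0) (i'+2*x1) (j'+2*x2) (i'+2*x3) (by push_cast; linear_combination h0)
      rcases hodd with ⟨q, hq⟩ | ⟨q, hq⟩ <;> omega
    · push Not at hij; exact ⟨hk, hij⟩
  · exfalso
    obtain ⟨M, n, r, ⟨x0, x1, x2, x3, rfl⟩, g, hn, e⟩ := left hk
    by_cases hij : i ≠ 0 ∨ j ≠ 0
    · obtain ⟨c, i', j', r', ⟨y0, y1, y2, y3, rfl⟩, s, hodd, e'⟩ := right hij
      rw [h, e'] at e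
      obtain ⟨z1, z2, z3⟩ := hind (M + 2^g*(2*x0) - 1 - 2^s*(c+2*y0)) (2^g*(n+2*x1) - 2^s*(i'+2*y1))
        (2^g*(2*x2) - 2^s*(j'+2*y2)) (2^g*(2*x3) - 2^s*(i'+2*y3))
        (by push_cast; linear_combination -e)
      obtain ⟨q, hq⟩ := hn
      rcases lt_trichotomy g s with hgs | hgs | hgs
      · obtain ⟨d, rfl⟩ : ∃ d, s = g + 1 + d := ⟨s-g-1, by omega⟩
        have : (2:ℤ)^g * (n+2*x1 - 2*(2^d*(i'+2*y1))) = 0 := by linear_combination z1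
        have := (mul_eq_zero.1 this).resolve_left (pow_ne_zero _ two_ne_zero)
        omega
      · subst hgs
        have w1 : (2:ℤ)^g * (n+2*x1 - (i'+2*y1)) = 0 := by linear_combination z1
        have w3 : (2:ℤ)^g * (2*x3 - (i'+2*y3)) = 0 := by linear_combination z3
        have w1 := (mul_eq_zero.1 w1).resolve_left (pow_ne_zero _ two_ne_zero)
        have w3 := (mul_eq_zero.1 w3).resolve_left (pow_ne_zero _ two_ne_zero)
        omega
      · obtain ⟨d, rfl⟩ : ∃ d, g = s + 1 + d := ⟨g-s-1, by omega⟩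
        have w1 : (2:ℤ)^s * (2*(2^d*(n+2*x1)) - (i'+2*y1)) = 0 := by linear_combination z1
        have w2 : (2:ℤ)^s * (2*(2^d*(2*x2)) - (j'+2*y2)) = 0 := by linear_combination z2
        have w1 := (mul_eq_zero.1 w1).resolve_left (pow_ne_zero _ two_ne_zero)
        have w2 := (mul_eq_zero.1 w2).resolve_left (pow_ne_zero _ two_ne_zero)
        rcases hodd with ⟨q, hq⟩ | ⟨q, hq⟩ <;> omega
    · push Not at hij
      rw [h, hij.1, hij.2] at e
      obtain ⟨z1, z2, z3⟩ := hind (M + 2^g*(2*x0) - 1) (2^g*(n+2*x1)) (2^g*(2*x2)) (2^g*(2*x3))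
        (by push_cast; simp at e; linear_combination -e)
      obtain ⟨q, hq⟩ := hn
      have := (mul_eq_zero.1 z1).resolve_left (pow_ne_zero _ two_ne_zero)
      omega

theorem inv_form {K : Type*} [Field K] [CharZero K] (R : Subring K) (x y A p r : K) (c : ℤ) (hp : p ∈ R)
    (hr : r ∈ R) (hy : y ∈ R) (hxy : x*y = 1) (hx : x = 1+4*A) (hA : A = c + p + 2*r) :
    ∃ (B : K) (c' : ℤ) (r' : K), r' ∈ R ∧ y = 1 + 4*B ∧ B = c' + p + 2*r' := by
  have t2 : (2:K) ∈ R := by exact_mod_cast natCast_mem R 2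
  have hAR : A ∈ R := by
    rw [hA]; exact R.add_mem (R.add_mem (intCast_mem R c) hp) (R.mul_mem t2 hr)
  refine ⟨-A*y, -c, -p - r + 2*(A*(A*y)), ?_, ?_, ?_⟩
  · exact R.add_mem (R.sub_mem (R.neg_mem hp) hr) (R.mul_mem t2 (R.mul_mem hAR (R.mul_mem hAR hy)))
  · rw [hx] at hxy; linear_combination hxy
  · have : y = 1 - 4*A*y := by rw [hx] at hxy; linear_combination hxy
    push_cast
    linear_combination (-A) * this - hA

theorem skolem_int {K : Type*} [Field K] [CharZero K] (f : K)
    (hf : f^4 - 234*f^2 + 1872*f - 4563 = 0)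
    (hind : ∀ a b c d : ℤ, (a:K) + b*f + c*(f^2/3) + d*(f^3/39) = 0 → b = 0 ∧ c = 0 ∧ d = 0)
    (m b : ℤ) (hm : Odd m) (hb : 4 ∣ b) (hb0 : b ≠ 0) (hu : (m:K) - b*f ≠ 0)
    (e1 e2 i1 i2 : K)
    (he1 : e1 = 139/4 - 29/4*f + 1/4*(f^2/3) + 5/4*(f^3/39))
    (he2 : e2 = -137/4 + 65/4*f - 7/4*(f^2/3) - 13/4*(f^3/39))
    (hi1 : i1 = -2513/4 + 757/4*f - 139/4*(f^2/3) - 197/4*(f^3/39))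
    (hi2 : i2 = 85/4 - 39/4*f + 19/4*(f^2/3) - 13/4*(f^3/39))
    (k i j : ℤ) (h : ((m:K) - b*f)^k = e1^i*e2^j) : k = 0 ∧ i = 0 ∧ j = 0 := by
  have hm1 : e1 * i1 = 1 := by
    rw [he1, hi1]
    linear_combination ((689/144)*f^0 + (-223/468)*f^1 + (-985/24336)*f^2)*hf
  have hm2 : e2 * i2 = 1 := by
    rw [he2, hi2]
    linear_combination ((23/144)*f^0 + (-1/12)*f^1 + (1/144)*f^2)*hf
  have e1sq : e1^2 = (431/2) + (-145/2)*f + (13/2)*(f^2/3) + (27/2)*(f^3/39) := by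
    rw [he1]
    linear_combination ((-407/1872)*f^0 + (5/936)*f^1 + (25/24336)*f^2)*hf
  have e1p4 : e1^4 = (-33227) + (8281)*f + (-470)*(f^2/3) + (-1493)*(f^3/39) := by
    rw [show e1^4 = (e1^2)^2 by ring, e1sq]
    linear_combination ((-8171/468)*f^0 + (3/2)*f^1 + (81/676)*f^2)*hf
  have e1p8 : e1^8 = (-112244495) + (3413662)*f + (2535848)*(f^2/3) + (494410)*(f^3/39) := by
    rw [show e1^8 = (e1^4)^2 by ring, e1p4]
    linear_combination ((-31186616/117)*f^0 + (1403420/117)*f^1 + (2229049/1521)*f^2)*hf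
  have e1p16 : e1^16 = (16425633808361233) + (-2238509307357092)*f + (-63731025235136)*(f^2/3)
      + (297931728495156)*(f^3/39) := by
    rw [show e1^16 = (e1^8)^2 by ring, e1p8]
    linear_combination ((7547943097744/9)*f^0 + (2507497219360/117)*f^1 + (244441248100/1521)*f^2)*hf
  have i1sq : i1^2 = (1057331/2) + (-318523/2)*f + (58505/2)*(f^2/3) + (82905/2)*(f^3/39) := by
    rw [hi1]
    linear_combination ((54961/1872)*f^0 + (27383/936)*f^1 + (38809/24336)*f^2)*hf
  have i1p4 : i1^4 = (374766764269) + (-112899206609)*f + (20736863258)*(f^2/3)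
      + (29385346205)*(f^3/39) := by
    rw [show i1^4 = (i1^2)^2 by ring, i1sq]
    linear_combination ((9772261885/468)*f^0 + (1616785675/78)*f^1 + (763693225/676)*f^2)*hf
  have n1 : e1*e2 = (1739/2) + (-149)*f + (3/2)*(f^2/3) + (23)*(f^3/39) := by
    rw [he1, he2]
    linear_combination ((65/144)*f^0 + (-1/39)*f^1 + (-5/1872)*f^2)*hf
  have n1sq : (e1*e2)^2 = (326611) + (-80248)*f + (4596)*(f^2/3) + (14176)*(f^3/39) := by
    rw [n1]
    linear_combination ((-14681/156)*f^0 + (23/39)*f^1 + (529/1521)*f^2)*hf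
  have n2 : i1*i2 = (-907/2) + (137)*f + (-51/2)*(f^2/3) + (-35)*(f^3/39) := by
    rw [hi1, hi2]
    linear_combination ((407/144)*f^0 + (-121/117)*f^1 + (197/1872)*f^2)*hf
  have n2sq : (i1*i2)^2 = (273259) + (-82376)*f + (15180)*(f^2/3) + (21344)*(f^3/39) := by
    rw [n2]
    linear_combination ((2311/156)*f^0 + (595/39)*f^1 + (1225/1521)*f^2)*hf
  set R := ordR f hf with hR
  have hfR : f ∈ R := ⟨0, 1, 0, 0, by simp⟩
  have hpsi : f^2/3 ∈ R := ⟨0, 0, 1, 0, by simp⟩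
  have hchi : f^3/39 ∈ R := ⟨0, 0, 0, 1, by simp⟩
  obtain ⟨A1, c1, r1, hr1, hE1, hA1⟩ : ∃ (A : K) (c : ℤ) (r : K), r ∈ R ∧ e1^16 = 1 + 4*A ∧
      A = c + (f+f^3/39) + 2*r := by
    refine ⟨(e1^16-1)/4, 4106408452090308, 0 + (-279813663419637)*f + (-7966378154392)*(f^2/3)
      + 37241466061894*(f^3/39), ⟨0, -279813663419637, -7966378154392, 37241466061894, by push_cast; ring⟩,
      by ring, ?_⟩
    rw [e1p16]; push_cast; ring
  obtain ⟨A2, c2, r2, hr2, hE2, hA2⟩ : ∃ (A : K) (c : ℤ) (r : K), r ∈ R ∧ -(e1*e2)^2 = 1 + 4*A ∧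
      A = c + (f^2/3) + 2*r := by
    refine ⟨(-(e1*e2)^2-1)/4, -81653, 0 + 10031*f + (-575)*(f^2/3) + (-1772)*(f^3/39),
      ⟨0, 10031, -575, -1772, by push_cast; ring⟩, by ring, ?_⟩
    rw [n1sq]; push_cast; ring
  obtain ⟨B1, d1, s1, hs1, hF1, hB1⟩ := inv_form R (e1^16) (i1^16) A1 (f+f^3/39) r1 c1
    (R.add_mem hfR hchi) hr1 (by
      rw [show i1^16 = (i1^4)^4 by ring]
      apply R.pow_mem
      rw [i1p4]
      exact ⟨374766764269, -112899206609, 20736863258, 29385346205, by push_cast; ring⟩)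
    (by rw [← mul_pow, hm1, one_pow]) hE1 hA1
  obtain ⟨B2, d2, s2, hs2, hF2, hB2⟩ := inv_form R (-(e1*e2)^2) (-(i1*i2)^2) A2 (f^2/3) r2 c2
    hpsi hr2 (by
      apply R.neg_mem
      rw [n2sq]
      exact ⟨273259, -82376, 15180, 21344, by push_cast; ring⟩)
    (by rw [neg_mul_neg, ← mul_pow, show e1*e2*(i1*i2) = (e1*i1)*(e2*i2) by ring, hm1, hm2]; simp) hE2 hA2
  have e10 : e1 ≠ 0 := left_ne_zero_of_mul_eq_one hm1
  have e20 : e2 ≠ 0 := left_ne_zero_of_mul_eq_one hm2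
  have hinv1 : e1⁻¹ = i1 := (eq_inv_of_mul_eq_one_right hm1).symm
  have hinv2 : e2⁻¹ = i2 := (eq_inv_of_mul_eq_one_right hm2).symm
  have main : ∀ k i j : ℤ, 0 ≤ k → ((m:K) - b*f)^k = e1^i*e2^j → k = 0 ∧ i = 0 ∧ j = 0 := by
    intro k i j hk h
    have h16 : ((m:K) - b*f)^(16*k) = (e1^16)^(i-j) * (-(e1*e2)^2)^(8*j) := by
      have ha : (-(e1*e2)^2)^(8*j) = (e1^16)^j * (e2^16)^j := by
        rw [zpow_mul, ← mul_zpow]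
        congr 1
        rw [show (8:ℤ) = ((8:ℕ):ℤ) by rfl, zpow_natCast]; ring
      rw [ha, ← mul_assoc, ← zpow_add₀ (pow_ne_zero _ e10), sub_add_cancel, mul_comm 16 k, zpow_mul, h,
        mul_zpow, ← zpow_mul, ← zpow_mul, mul_comm i, mul_comm j, zpow_mul, zpow_mul]
      norm_cast
    have hx1 : (e1^16)⁻¹ = i1^16 := by rw [← inv_pow, hinv1]
    have hx2 : (-(e1*e2)^2)⁻¹ = -(i1*i2)^2 := by
      rw [inv_neg, ← inv_pow, mul_inv, hinv1, hinv2]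
    obtain ⟨kn, hkn⟩ := Int.eq_ofNat_of_zero_le (show 0 ≤ 16*k by omega)
    rw [hkn, zpow_natCast] at h16
    have key : kn = 0 ∧ (i-j) = 0 ∧ 8*j = 0 := by
      rcases Int.eq_nat_or_neg (i-j) with ⟨p, hp | hp⟩ <;>
      rcases Int.eq_nat_or_neg (8*j) with ⟨q, hq | hq⟩
      · rw [hp, hq, zpow_natCast, zpow_natCast, hE1, hE2] at h16
        have := skolem_nat f hf hind m b hm hb hb0 A1 A2 c1 c2 r1 r2 hr1 hr2
          (by rw [hA1]; ring) hA2 kn p q h16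
        omega
      · rw [hp, hq, zpow_natCast, zpow_neg, zpow_natCast, ← inv_pow, hx2, hE1, hF2] at h16
        have := skolem_nat f hf hind m b hm hb hb0 A1 B2 c1 d2 r1 s2 hr1 hs2
          (by rw [hA1]; ring) hB2 kn p q h16
        omega
      · rw [hp, hq, zpow_natCast, zpow_neg, zpow_natCast, ← inv_pow, hx1, hF1, hE2] at h16
        have := skolem_nat f hf hind m b hm hb hb0 B1 A2 d1 c2 s1 r2 hs1 hr2
          (by rw [hB1]; ring) hA2 kn p q h16
        omega
      · rw [hp, hq, zpow_neg, zpow_neg, zpow_natCast, zpow_natCast, ← inv_pow, hx1, ← inv_pow, hx2, hF1, hF2] at h16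
        have := skolem_nat f hf hind m b hm hb hb0 B1 B2 d1 d2 s1 s2 hs1 hs2
          (by rw [hB1]; ring) hB2 kn p q h16
        omega
    omega
  rcases le_total 0 k with hk | hk
  · exact main k i j hk h
  · have := main (-k) (-i) (-j) (by omega) (by rw [zpow_neg, zpow_neg, zpow_neg, h, mul_inv])
    omega

open NumberField NumberField.Units NumberField.InfinitePlace in
theorem dirichlet_dep (K : Type) [Field K] [NumberField K] (hK : Module.finrank ℚ K = 4)
    (σ : K →+* ℂ) (hσ : ¬ ComplexEmbedding.IsReal σ) (u v w : (𝓞 K)ˣ) :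
    ∃ k i j : ℤ, ¬ (k = 0 ∧ i = 0 ∧ j = 0) ∧ u^k * v^i * w^j = 1 := by
  have hrank : NumberField.Units.rank K ≤ 2 := by
    have h1 := card_add_two_mul_card_eq_rank K
    have h2 : 0 < nrComplexPlaces K := by
      classical
      refine Fintype.card_pos_iff.2 ?_
      exact ⟨⟨InfinitePlace.mk σ, isComplex_mk_iff.2 hσ⟩⟩
    have h3 := card_eq_nrRealPlaces_add_nrComplexPlaces K
    rw [NumberField.Units.rank]
    omega
  let vv : Fin 3 → Additive (𝓞 K)ˣ := ![Additive.ofMul u, Additive.ofMul v, Additive.ofMul w]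
  have hdep : ¬ LinearIndependent ℤ vv := by
    intro hli
    have h1 := hli.fintype_card_le_finrank
    rw [NumberField.Units.finrank_eq] at h1
    simp at h1
    omega
  rw [Fintype.not_linearIndependent_iff] at hdep
  obtain ⟨g, hg, i, hi⟩ := hdep
  refine ⟨g 0, g 1, g 2, ?_, ?_⟩
  · rintro ⟨h0, h1, h2⟩
    fin_cases i <;> simp_all
  · simp only [Fin.sum_univ_three, vv] at hg
    exact hg

theorem exists_root : ∃ z : ℂ, z^4 - 234*z^2 + 1872*z - 4563 = 0 ∧ z.im ≠ 0 := by
  obtain ⟨c, hc0, hc⟩ : ∃ c : ℝ, 0 ≤ c ∧ c^3 = 169 :=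
    ⟨(169:ℝ)^((1:ℝ)/3), by positivity, by
      rw [← Real.rpow_natCast, ← Real.rpow_mul (by norm_num)]; norm_num⟩
  have hc1 : 5.5 < c := by nlinarith [sq_nonneg c, sq_nonneg (c-5.5), sq_nonneg (c+5.5)]
  have hc2 : c < 5.533 := by nlinarith [sq_nonneg c, sq_nonneg (c-5.533), sq_nonneg (c+5.533)]
  set P := 156 - 12*c with hP
  have hPpos : 0 < P := by rw [hP]; linarith
  set a := Real.sqrt P with ha
  have ha2 : a^2 = P := Real.sq_sqrt hPpos.le
  have hapos : 0 < a := Real.sqrt_pos.2 hPpos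
  have ha9 : a < 9.487 := by nlinarith
  set γ := (P - 234 + 1872/a)/2 with hγ
  set β := (P - 234 - 1872/a)/2 with hβ
  have hdisc : 0 < 4*γ - P := by
    have : 394 < 3744/a := by rw [lt_div_iff₀ hapos]; linarith
    have h2 : 3744/a = 2*(1872/a) := by ring
    rw [hγ]; linarith
  set s := Real.sqrt (4*γ-P) with hs
  have hs2 : s^2 = 4*γ-P := Real.sq_sqrt hdisc.le
  have hspos : 0 < s := Real.sqrt_pos.2 hdisc
  have e1 : β + γ - a^2 = -234 := by rw [ha2, hβ, hγ]; ring
  have e2 : a*(γ-β) = 1872 := by rw [hβ, hγ]; field_simp; ring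
  have e3 : β*γ = -4563 := by
    have h1 : (a*(γ-β))^2 = P*((β+γ)^2 - 4*(β*γ)) := by rw [← ha2]; ring
    rw [e2, show β+γ = P - 234 by linarith] at h1
    have h2 : P*(4*(β*γ)) = P*(4*(-4563)) := by
      have h3 : P*(P-234)^2 - 1872^2 = P*(4*(-4563)) := by
        rw [hP]; linear_combination (-1728)*hc
      linarith
    have := mul_left_cancel₀ hPpos.ne' h2
    linarith
  refine ⟨⟨a/2, s/2⟩, ?_, by simp; exact hspos.ne'⟩
  have hz : (⟨a/2, s/2⟩:ℂ) = (a:ℂ)/2 + (s:ℂ)/2*Complex.I := by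
    apply Complex.ext <;> simp
  rw [hz]
  set z := (a:ℂ)/2 + (s:ℂ)/2*Complex.I with hzz
  have hs2c : (s:ℂ)^2 = 4*γ - (a:ℂ)^2 := by rw [← ha2] at hs2; exact_mod_cast hs2
  have e1c : (β:ℂ) + γ - (a:ℂ)^2 = -234 := by exact_mod_cast e1
  have e2c : (a:ℂ)*(γ-β) = 1872 := by exact_mod_cast e2
  have e3c : (β:ℂ)*γ = -4563 := by exact_mod_cast e3
  have hq : z^2 - a*z + γ = 0 := by
    rw [hzz]; linear_combination (s:ℂ)^2/4 * Complex.I_sq - hs2c/4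
  linear_combination (z^2+a*z+β)*hq - z^2*e1c - z*e2c - e3c

open Polynomial in
theorem irr_quartic : Irreducible (X^4 - 234*X^2 + 1872*X - 4563 : ℤ[X]) := by
  have hmon : (X^4 - 234*X^2 + 1872*X - 4563 : ℤ[X]).Monic := by monicity!
  have hdeg : (X^4 - 234*X^2 + 1872*X - 4563 : ℤ[X]).natDegree = 4 := by compute_degree!
  rw [hmon.irreducible_iff_natDegree']
  refine ⟨fun h => by rw [h] at hdeg; simp at hdeg, ?_⟩
  intro f g hf hg hfg hmem
  rw [hdeg, Finset.mem_Ioc] at hmem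
  have hfd : f.natDegree + g.natDegree = 4 := by
    rw [← hf.natDegree_mul hg, hfg, hdeg]
  have hg12 : g.natDegree = 1 ∨ g.natDegree = 2 := by omega
  rcases hg12 with h1 | h2
  · have hgX : g = X + C (g.coeff 0) := hg.eq_X_add_C h1
    have hev : eval (-(g.coeff 0)) (X^4 - 234*X^2 + 1872*X - 4563 : ℤ[X]) = 0 := by
      rw [← hfg, eval_mul]
      have : eval (-(g.coeff 0)) g = 0 := by
        conv_lhs => rw [hgX]
        simp
      rw [this, mul_zero]
    generalize -(g.coeff 0) = r at hev
    simp at hev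
    have h5 := congrArg (Int.cast : ℤ → ZMod 5) hev
    push_cast at h5
    generalize (r : ZMod 5) = q at h5
    revert h5
    revert q
    decide
  · have hf2 : f.natDegree = 2 := by omega
    have c4 := congrArg (fun p => coeff p 3) hfg
    have c3 := congrArg (fun p => coeff p 2) hfg
    have c2 := congrArg (fun p => coeff p 1) hfg
    have c1 := congrArg (fun p => coeff p 0) hfg
    have f2 : f.coeff 2 = 1 := by rw [← hf2]; exact hf
    have g2 : g.coeff 2 = 1 := by rw [← h2]; exact hg
    have f3 : f.coeff 3 = 0 := coeff_eq_zero_of_natDegree_lt (by omega)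
    have g3 : g.coeff 3 = 0 := coeff_eq_zero_of_natDegree_lt (by omega)
    have r1 : (1872 : ℤ[X]) = C 1872 := rfl
    have r2 : (234 : ℤ[X]) = C 234 := rfl
    have r3 : (4563 : ℤ[X]) = C 4563 := rfl
    rw [r1, r2, r3] at c1 c2 c3 c4
    simp [coeff_mul, Finset.Nat.antidiagonal_succ, f2, g2, f3, g3, coeff_X, coeff_C, coeff_X_pow] at c1 c2 c3 c4
    generalize f.coeff 0 = b at *
    generalize f.coeff 1 = a at *
    generalize g.coeff 0 = d at *
    generalize g.coeff 1 = c at *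
    have hc : c = -a := by linarith
    subst hc
    have key : (156-a^2)^3 = 292032 := by
      have h1 : b + d = a^2 - 234 := by linarith
      have h2 : a*(d-b) = 1872 := by linarith
      have h3 : (a*(d-b))^2 = a^2*((b+d)^2 - 4*(b*d)) := by ring
      rw [h1, h2, c1] at h3
      linarith
    generalize 156-a^2 = t at key
    have : t < 67 := by nlinarith [sq_nonneg t, sq_nonneg (t-67), sq_nonneg (t+67)]
    have : 66 < t := by nlinarith [sq_nonneg t, sq_nonneg (t-66), sq_nonneg (t+66)]
    omega

theorem mk_unit {K : Type} [Field K] [NumberField K] (x y : K) (hxy : x * y = 1)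
    (hx : IsIntegral ℤ x) (hy : IsIntegral ℤ y) :
    ∃ u : (NumberField.RingOfIntegers K)ˣ, ((u : NumberField.RingOfIntegers K) : K) = x := by
  refine ⟨⟨⟨x, hx⟩, ⟨y, hy⟩, ?_, ?_⟩, rfl⟩
  · exact NumberField.RingOfIntegers.ext hxy
  · exact NumberField.RingOfIntegers.ext ((mul_comm y x).trans hxy)

open Polynomial in
theorem isIntegral_quartic {K : Type} [Field K] (x : K) (a b c d : ℤ)
    (h : x^4 - ((a:K) + b*x + c*x^2 + d*x^3) = 0) : IsIntegral ℤ x := by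
  refine ⟨X^4 - (C a + C b * X + C c * X^2 + C d * X^3), by monicity!, ?_⟩
  have e : ∀ n : ℤ, eval₂ (algebraMap ℤ K) x (C n) = (n : K) := fun n => by
    rw [eval₂_C]; simp
  rw [eval₂_sub, eval₂_add, eval₂_add, eval₂_add, eval₂_mul, eval₂_mul, eval₂_mul, e, e, e, e,
    eval₂_X_pow, eval₂_X_pow, eval₂_X_pow, eval₂_X]
  exact h

open Polynomial in
theorem minpoly_root (z : ℂ) (hz : z^4 - 234*z^2 + 1872*z - 4563 = 0) :
    minpoly ℚ z = X^4 - 234*X^2 + 1872*X - 4563 ∧ IsIntegral ℚ z := by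
  have hmonZ : (X^4 - 234*X^2 + 1872*X - 4563 : ℤ[X]).Monic := by monicity!
  have hmon : (X^4 - 234*X^2 + 1872*X - 4563 : ℚ[X]).Monic := by monicity!
  have hirr : Irreducible (X^4 - 234*X^2 + 1872*X - 4563 : ℚ[X]) := by
    have := (hmonZ.irreducible_iff_irreducible_map_fraction_map (K := ℚ)).1 irr_quartic
    simpa using this
  have hroot : aeval z (X^4 - 234*X^2 + 1872*X - 4563 : ℚ[X]) = 0 := by
    have r1 : (1872 : ℚ[X]) = C 1872 := rfl
    have r2 : (234 : ℚ[X]) = C 234 := rfl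
    have r3 : (4563 : ℚ[X]) = C 4563 := rfl
    rw [r1, r2, r3]
    simp only [map_sub, map_add, map_mul, map_pow, aeval_X, aeval_C]
    simpa using hz
  exact ⟨(minpoly.eq_of_irreducible_of_monic hirr hroot hmon).symm, _, hmon, hroot⟩

open Polynomial in
theorem indep_root (z : ℂ) (hz : z^4 - 234*z^2 + 1872*z - 4563 = 0) (a b c d : ℚ)
    (h : (a:ℂ) + b*z + c*z^2 + d*z^3 = 0) : b = 0 ∧ c = 0 ∧ d = 0 := by
  obtain ⟨hmin, hintg⟩ := minpoly_root z hz
  have hp : (C d * X^3 + C c * X^2 + C b * X + C a : ℚ[X]) = 0 := by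
    by_contra hne
    have h1 := natDegree_le_natDegree (minpoly.degree_le_of_ne_zero ℚ z hne (by
      simp; linear_combination h))
    rw [hmin] at h1
    have h2 : (X^4 - 234*X^2 + 1872*X - 4563 : ℚ[X]).natDegree = 4 := by compute_degree!
    have h3 := natDegree_cubic_le (a := d) (b := c) (c := b) (d := a)
    omega
  have hd := congrArg (fun p => coeff p 3) hp
  have hc := congrArg (fun p => coeff p 2) hp
  have hb := congrArg (fun p => coeff p 1) hp
  simp [coeff_X, coeff_C] at hb hc hd
  exact ⟨hb, hc, hd⟩

theorem thue_mod16 : ∀ m b : ZMod 16,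
    m^4-234*m^2*b^2+1872*m*b^3-4563*b^4 = 1 → (m * 8 ≠ 0) ∧ b * 4 = 0 := by decide

theorem thue (m b : ℤ) (h : m^4-234*m^2*b^2+1872*m*b^3-4563*b^4 = 1) : b = 0 := by
  by_contra hb0
  have hmod := thue_mod16 m b (by exact_mod_cast congrArg (Int.cast : ℤ → ZMod 16) h)
  have hm : Odd m := by
    by_contra hne
    rw [Int.not_odd_iff_even] at hne
    obtain ⟨k, hk⟩ := hne
    apply hmod.1
    have : ((m * 8 : ℤ) : ZMod 16) = 0 := by
      rw [ZMod.intCast_zmod_eq_zero_iff_dvd]; push_cast; omega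
    exact_mod_cast this
  have hb : 4 ∣ b := by
    have : ((b * 4 : ℤ) : ZMod 16) = 0 := by push_cast; exact hmod.2
    rw [ZMod.intCast_zmod_eq_zero_iff_dvd] at this
    push_cast at this; omega
  obtain ⟨z, hz, him⟩ := exists_root
  obtain ⟨hmin, hintg⟩ := minpoly_root z hz
  let K := IntermediateField.adjoin ℚ {z}
  have hfin : Module.finrank ℚ K = 4 := by
    rw [IntermediateField.adjoin.finrank hintg, hmin]; compute_degree!
  have : FiniteDimensional ℚ K := Module.finite_of_finrank_pos (by omega)
  have : NumberField K := { }
  let f : K := IntermediateField.AdjoinSimple.gen ℚ z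
  have hfz : (f : ℂ) = z := IntermediateField.AdjoinSimple.coe_gen ℚ z
  have hf : f^4 - 234*f^2 + 1872*f - 4563 = 0 := by
    apply Subtype.ext
    push_cast [hfz]
    exact hz
  have hind : ∀ a b c d : ℤ, (a:K) + b*f + c*(f^2/3) + d*(f^3/39) = 0 → b = 0 ∧ c = 0 ∧ d = 0 := by
    intro a b c d hh
    have h1 := congrArg (Subtype.val) hh
    have c3 : ((3:K):ℂ) = 3 := rfl
    have c39 : ((39:K):ℂ) = 39 := rfl
    push_cast [hfz, c3, c39] at h1
    obtain ⟨h2, h3, h4⟩ := indep_root z hz a b (c/3) (d/39) (by push_cast; linear_combination h1)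
    refine ⟨by exact_mod_cast h2, ?_, ?_⟩
    · have : (c:ℚ) = 0 := by linarith
      exact_mod_cast this
    · have : (d:ℚ) = 0 := by linarith
      exact_mod_cast this
  let σ : K →+* ℂ := K.val
  have hσ : ¬ NumberField.ComplexEmbedding.IsReal σ := by
    intro hr
    have h1 := NumberField.ComplexEmbedding.isReal_iff.1 hr
    have h2 := congrArg (fun φ : K →+* ℂ => φ f) h1
    simp only [NumberField.ComplexEmbedding.conjugate_coe_eq] at h2
    have h3 : σ f = z := hfz
    rw [h3] at h2
    exact him (Complex.conj_eq_iff_im.1 h2)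
  clear_value f
  obtain ⟨e1, he1⟩ : ∃ e1 : K, e1 = 139/4 - 29/4*f + 1/4*(f^2/3) + 5/4*(f^3/39) := ⟨_, rfl⟩
  obtain ⟨e2, he2⟩ : ∃ e2 : K, e2 = -137/4 + 65/4*f - 7/4*(f^2/3) - 13/4*(f^3/39) := ⟨_, rfl⟩
  obtain ⟨i1, hi1⟩ : ∃ i1 : K, i1 = -2513/4 + 757/4*f - 139/4*(f^2/3) - 197/4*(f^3/39) := ⟨_, rfl⟩
  obtain ⟨i2, hi2⟩ : ∃ i2 : K, i2 = 85/4 - 39/4*f + 19/4*(f^2/3) - 13/4*(f^3/39) := ⟨_, rfl⟩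
  have hei1 : e1 * i1 = 1 := by
    rw [he1, hi1]
    linear_combination ((689/144) + (-223/468)*f + (-985/24336)*f^2)*hf
  have hei2 : e2 * i2 = 1 := by
    rw [he2, hi2]
    linear_combination ((23/144) + (-1/12)*f + (1/144)*f^2)*hf
  have he1i : IsIntegral ℤ e1 := by
    apply isIntegral_quartic e1 (-1) (-842) (-36) (-2)
    rw [he1]; push_cast
    linear_combination ((-3533381/9984)*f^0 + (1035791/7488)*f^1 + (-1424965/97344)*f^2 + (-173351/292032)*f^3 + (297017/1752192)*f^4 + (-24355/11389248)*f^5 + (-2525/3796416)*f^6 + (125/11389248)*f^7 + (625/592240896)*f^8)*hf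
  have hi1i : IsIntegral ℤ i1 := by
    apply isIntegral_quartic i1 (-1) (-2) (-36) (-842)
    rw [hi1]; push_cast
    linear_combination ((38647377849/3328)*f^0 + (34095022421/7488)*f^1 + (-471811586065/97344)*f^2 + (295625183315/292032)*f^3 + (-20373235087/1752192)*f^4 + (-155590145521/11389248)*f^5 + (34501201/97344)*f^6 + (1062706847/11389248)*f^7 + (1506138481/592240896)*f^8)*hf
  have he2i : IsIntegral ℤ e2 := by
    apply isIntegral_quartic e2 (-1) 1294 (-1008) 58
    rw [he2]; push_cast
    linear_combination ((-830297/768)*f^0 + (637169/576)*f^1 + (-22841/64)*f^2 + (52663/1728)*f^3 + (29105/10368)*f^4 + (-1997/5184)*f^5 + (-7/576)*f^6 + (7/5184)*f^7 + (1/20736)*f^8)*hf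
  have hi2i : IsIntegral ℤ i2 := by
    apply isIntegral_quartic i2 (-1) 58 (-1008) 1294
    rw [hi2]; push_cast
    linear_combination ((1979159/768)*f^0 + (-1448629/576)*f^1 + (609011/576)*f^2 + (-15769/64)*f^3 + (355145/10368)*f^4 + (-14815/5184)*f^5 + (239/1728)*f^6 + (-19/5184)*f^7 + (1/20736)*f^8)*hf
  have hfi : IsIntegral ℤ f := by
    apply isIntegral_quartic f 4563 (-1872) 234 0
    push_cast; linear_combination hf
  have hIm : ∀ n : ℤ, IsIntegral ℤ (n : K) := fun n => isIntegral_algebraMap (R := ℤ) (A := K) (x := n)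
  have hui : IsIntegral ℤ ((m:K) - b*f) := (hIm m).sub ((hIm b).mul hfi)
  have hvi : IsIntegral ℤ ((m^3 : ℤ) + (m^2*b : ℤ)*f + (m*b^2 : ℤ)*(f^2-(234:ℤ)) + (b^3 : ℤ)*(f^3 - (234:ℤ)*f + (1872:ℤ)) : K) := by
    refine (((hIm _).add ((hIm _).mul hfi)).add ((hIm _).mul ((hfi.pow 2).sub (hIm _)))).add ((hIm _).mul ?_)
    exact ((hfi.pow 3).sub ((hIm _).mul hfi)).add (hIm _)
  have hK : (m:K)^4-234*(m:K)^2*b^2+1872*m*b^3-4563*(b:K)^4 = 1 := by exact_mod_cast congrArg (Int.cast : ℤ → K) h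
  have huv : ((m:K) - b*f) * ((m^3 : ℤ) + (m^2*b : ℤ)*f + (m*b^2 : ℤ)*(f^2-(234:ℤ)) + (b^3 : ℤ)*(f^3 - (234:ℤ)*f + (1872:ℤ)) : K) = 1 := by
    push_cast
    linear_combination hK - (b:K)^4*hf
  obtain ⟨U, hU⟩ := mk_unit _ _ huv hui hvi
  obtain ⟨E1, hE1⟩ := mk_unit _ _ hei1 he1i hi1i
  obtain ⟨E2, hE2⟩ := mk_unit _ _ hei2 he2i hi2i
  have hu0 : (m:K) - b*f ≠ 0 := left_ne_zero_of_mul_eq_one huv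
  have he10 : e1 ≠ 0 := left_ne_zero_of_mul_eq_one hei1
  have he20 : e2 ≠ 0 := left_ne_zero_of_mul_eq_one hei2
  obtain ⟨k, i, j, hne, hrel⟩ := dirichlet_dep K hfin σ hσ U E1 E2
  have hrelK : ((m:K) - b*f)^k * e1^i * e2^j = 1 := by
    have h1 := congrArg (fun v : (NumberField.RingOfIntegers K)ˣ => ((v : NumberField.RingOfIntegers K) : K)) hrel
    simpa [NumberField.Units.coe_mul, NumberField.Units.coe_zpow, hU, hE1, hE2] using h1
  have hfinal : ((m:K) - b*f)^k = e1^(-i) * e2^(-j) := by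
    rw [zpow_neg, zpow_neg]
    have := zpow_ne_zero i he10
    have := zpow_ne_zero j he20
    field_simp
    linear_combination hrelK
  obtain ⟨a1, a2, a3⟩ := skolem_int f hf hind m b hm hb hb0 hu0 e1 e2 i1 i2 he1 he2 hi1 hi2 k (-i) (-j) hfinal
  exact hne ⟨a1, by omega, by omega⟩

theorem reduce_vec (t p : ℝ) (hp : 0 < p) : ∃ m b n d : ℤ, m*d - n*b = 1 ∧
    3 * (p*((m:ℝ) - t*b)^2 + (b:ℝ)^2/p)^2 ≤ 4 := by
  let z : UpperHalfPlane := ⟨⟨t, 1/p⟩, by positivity⟩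
  obtain ⟨g, hg⟩ := ModularGroup.exists_smul_mem_fd z
  have h1 := ModularGroup.three_le_four_mul_im_sq_of_mem_fd hg
  refine ⟨g 1 1, -(g 1 0), -(g 0 1), g 0 0, ?_, ?_⟩
  · have := g.det_coe
    rw [Matrix.det_fin_two] at this
    linarith
  · rw [ModularGroup.im_smul_eq_div_normSq] at h1
    have hn : Complex.normSq (UpperHalfPlane.denom (g : GL (Fin 2) ℝ) z) =
        ((g 1 1 : ℝ) + t * (g 1 0))^2 + (g 1 0 : ℝ)^2/p^2 := by
      rw [ModularGroup.denom_apply, Complex.normSq_apply]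
      simp [z, UpperHalfPlane.coe]
      ring
    have him : z.im = 1/p := rfl
    rw [hn, him] at h1
    push_cast
    set A := ((g 1 1 : ℝ) + t * (g 1 0))^2 + (g 1 0 : ℝ)^2/p^2 with hA
    have hAN : p*((g 1 1 : ℝ) - t*(-(g 1 0)))^2 + (-(g 1 0:ℝ))^2/p = p * A := by
      rw [hA]; field_simp; ring
    rw [hAN]
    have hA0 : A ≠ 0 := by
      intro h; rw [h] at h1; norm_num at h1
    have e : (1/p/A)^2 * (p*A)^2 = 1 := by field_simp
    nlinarith [sq_nonneg (p*A)]

theorem reduce_uw (t p s : ℝ) (hs : 0 < s) (hsp : s^2 = p) : ∃ m b n d : ℤ, m*d - n*b = 1 ∧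
    ∃ u w : ℝ, (m:ℝ) - t*b = u/s ∧ (b:ℝ) = w*s ∧ 3*(u^2+w^2)^2 ≤ 4 := by
  have hp : 0 < p := by rw [← hsp]; positivity
  obtain ⟨m, b, n, d, h1, h2⟩ := reduce_vec t p hp
  refine ⟨m, b, n, d, h1, s*((m:ℝ) - t*b), b/s, by field_simp, by field_simp, ?_⟩
  have : (s*((m:ℝ) - t*b))^2 + ((b:ℝ)/s)^2 = p*((m:ℝ) - t*b)^2 + (b:ℝ)^2/p := by
    rw [← hsp]; field_simp
  rw [this]; exact h2

/-- Binary quartic form with binomial coefficients. -/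
def qf (c0 c1 c2 c3 c4 m b : ℤ) : ℤ :=
  c0*m^4 + 4*c1*m^3*b + 6*c2*m^2*b^2 + 4*c3*m*b^3 + c4*b^4

/-- Hessian covariant of the quartic form. -/
def qh (c0 c1 c2 c3 c4 m b : ℤ) : ℤ :=
  (c1*m^2+2*c2*m*b+c3*b^2)^2 - (c0*m^2+2*c1*m*b+c2*b^2)*(c2*m^2+2*c3*m*b+c4*b^2)

/-- First polar. -/
def q1 (c0 c1 c2 c3 c4 m b n d : ℤ) : ℤ :=
  n*(c0*m^3+3*c1*m^2*b+3*c2*m*b^2+c3*b^3) + d*(c1*m^3+3*c2*m^2*b+3*c3*m*b^2+c4*b^3)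

/-- Second polar. -/
def q2 (c0 c1 c2 c3 c4 m b n d : ℤ) : ℤ :=
  n^2*(c0*m^2+2*c1*m*b+c2*b^2) + 2*n*d*(c1*m^2+2*c2*m*b+c3*b^2) + d^2*(c2*m^2+2*c3*m*b+c4*b^2)

set_option maxHeartbeats 4000000 in
theorem inv_I (c0 c1 c2 c3 c4 m b n d : ℤ) :
    qf c0 c1 c2 c3 c4 m b * qf c0 c1 c2 c3 c4 n d
      - 4 * q1 c0 c1 c2 c3 c4 m b n d * q1 c0 c1 c2 c3 c4 n d m b
      + 3 * (q2 c0 c1 c2 c3 c4 m b n d)^2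
    = (m*d-n*b)^4 * (c0*c4 - 4*c1*c3 + 3*c2^2) := by
  unfold qf q1 q2; ring

set_option maxHeartbeats 4000000 in
theorem inv_J (c0 c1 c2 c3 c4 m b n d : ℤ) :
    qf c0 c1 c2 c3 c4 m b * q2 c0 c1 c2 c3 c4 m b n d * qf c0 c1 c2 c3 c4 n d
      + 2 * q1 c0 c1 c2 c3 c4 m b n d * q2 c0 c1 c2 c3 c4 m b n d * q1 c0 c1 c2 c3 c4 n d m b
      - (q2 c0 c1 c2 c3 c4 m b n d)^3
      - qf c0 c1 c2 c3 c4 m b * (q1 c0 c1 c2 c3 c4 n d m b)^2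
      - (q1 c0 c1 c2 c3 c4 m b n d)^2 * qf c0 c1 c2 c3 c4 n d
    = (m*d-n*b)^6 * (c0*c2*c4 + 2*c1*c2*c3 - c2^3 - c0*c3^2 - c1^2*c4) := by
  unfold qf q1 q2; ring

theorem inv_qf (c0 c1 c2 c3 c4 m b n d p q : ℤ) :
    qf c0 c1 c2 c3 c4 (m*p+n*q) (b*p+d*q) =
    qf (qf c0 c1 c2 c3 c4 m b) (q1 c0 c1 c2 c3 c4 m b n d) (q2 c0 c1 c2 c3 c4 m b n d)
      (q1 c0 c1 c2 c3 c4 n d m b) (qf c0 c1 c2 c3 c4 n d) p q := by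
  unfold qf q1 q2; ring

set_option maxHeartbeats 4000000 in
theorem inv_qh (c0 c1 c2 c3 c4 m b n d p q : ℤ) :
    qh (qf c0 c1 c2 c3 c4 m b) (q1 c0 c1 c2 c3 c4 m b n d) (q2 c0 c1 c2 c3 c4 m b n d)
      (q1 c0 c1 c2 c3 c4 n d m b) (qf c0 c1 c2 c3 c4 n d) p q =
    (m*d-n*b)^2 * qh c0 c1 c2 c3 c4 (m*p+n*q) (b*p+d*q) := by
  unfold qf qh q1 q2; ring

theorem syz (a0 a1 a2 a3 a4 J : ℤ) (hI : a0*a4 - 4*a1*a3 + 3*a2^2 = 0)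
    (hJ : a0*a2*a4 + 2*a1*a2*a3 - a2^3 - a0*a3^2 - a1^2*a4 = J) :
    (a0^2*a3-3*a0*a1*a2+2*a1^3)^2 = 4*(a1^2-a0*a2)^3 - J*a0^3 := by
  rw [← hJ]
  linear_combination (-a0^2*(a1^2-a0*a2))*hI

theorem form_red (c0 c1 c2 c3 c4 J m b n d : ℤ) (hdet : m*d - n*b = 1)
    (hI : c0*c4 - 4*c1*c3 + 3*c2^2 = 0)
    (hJ : c0*c2*c4 + 2*c1*c2*c3 - c2^3 - c0*c3^2 - c1^2*c4 = J)
    (hne : qf c0 c1 c2 c3 c4 m b ≠ 0) :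
    ∃ a0 a1 a2 a3 a4 n d : ℤ, a0 = qf c0 c1 c2 c3 c4 m b ∧ m*d - n*b = 1 ∧
      0 ≤ a1 ∧ a1 < |a0| ∧ a1^2 - a0*a2 = qh c0 c1 c2 c3 c4 m b ∧
      a0*a4 - 4*a1*a3 + 3*a2^2 = 0 ∧
      (a0^2*a3-3*a0*a1*a2+2*a1^3)^2 = 4*(a1^2-a0*a2)^3 - J*a0^3 ∧
      (∀ p q, qf c0 c1 c2 c3 c4 (m*p+n*q) (b*p+d*q) = qf a0 a1 a2 a3 a4 p q) ∧
      (∀ p q, qh c0 c1 c2 c3 c4 (m*p+n*q) (b*p+d*q) = qh a0 a1 a2 a3 a4 p q) := by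
  obtain ⟨a0, ha0⟩ : ∃ a0, a0 = qf c0 c1 c2 c3 c4 m b := ⟨_, rfl⟩
  obtain ⟨k, hk⟩ : ∃ k, k = -(q1 c0 c1 c2 c3 c4 m b n d / a0) := ⟨_, rfl⟩
  obtain ⟨n', hn'⟩ : ∃ n', n' = n + k*m := ⟨_, rfl⟩
  obtain ⟨d', hd'⟩ : ∃ d', d' = d + k*b := ⟨_, rfl⟩
  have hdet' : m*d' - n'*b = 1 := by rw [hn', hd']; linear_combination hdet
  have hq1 : q1 c0 c1 c2 c3 c4 m b n' d' = q1 c0 c1 c2 c3 c4 m b n d % a0 := by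
    rw [Int.emod_def]
    have : q1 c0 c1 c2 c3 c4 m b n' d' = q1 c0 c1 c2 c3 c4 m b n d + k * a0 := by
      rw [ha0, hn', hd']; unfold q1 qf; ring
    rw [this, hk]; ring
  have hne0 : a0 ≠ 0 := by rw [ha0]; exact hne
  have hI' := inv_I c0 c1 c2 c3 c4 m b n' d'
  have hJ' := inv_J c0 c1 c2 c3 c4 m b n' d'
  have hH := inv_qh c0 c1 c2 c3 c4 m b n' d'
  have hF := inv_qf c0 c1 c2 c3 c4 m b n' d'
  rw [hdet', hI] at hI'
  rw [hdet', hJ] at hJ'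
  refine ⟨a0, q1 c0 c1 c2 c3 c4 m b n' d', q2 c0 c1 c2 c3 c4 m b n' d',
    q1 c0 c1 c2 c3 c4 n' d' m b, qf c0 c1 c2 c3 c4 n' d', n', d', ha0, hdet', ?_, ?_, ?_, ?_, ?_, ?_, ?_⟩
  · rw [hq1]; exact Int.emod_nonneg _ hne0
  · rw [hq1]; exact Int.emod_lt_abs _ hne0
  · have := hH 1 0
    rw [hdet'] at this
    rw [ha0]
    simp only [mul_one, mul_zero, add_zero, one_pow, one_mul] at this
    rw [← this]; conv_rhs => unfold qh
    ring
  · rw [ha0]; linear_combination hI'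
  · apply syz (a4 := qf c0 c1 c2 c3 c4 n' d')
    · rw [ha0]; linear_combination hI'
    · rw [ha0]; linear_combination hJ'
  · intro p q; rw [ha0]; exact hF p q
  · intro p q; rw [ha0, hH, hdet']; ring

/-- Moduli together with the bit masks of the squares. -/
def sieveL : List (ℕ × ℕ) := [(64, 144680414395695635), (63, 288872697407275667), (65, 20863489977805260307), (11, 571), (17, 107287), (19, 199411), (23, 340831),
  (29, 332473075), (31, 303908791), (37, 96068509339), (41, 1870503675703), (43, 3678700564051), (47, 4626135339999),
  (53, 5310023542746835), (59, 156326468341437115), (61, 1662926210933060155), (67, 61808106872519771731), (71, 20052041432995567487), (73, 9059857384996697084767), (79, 89932533647391829339959)]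

/-- Necessary condition for being a square. -/
def sieve (N : ℤ) : Bool := sieveL.all fun p => p.2.testBit (N % (p.1 : ℤ)).toNat

theorem sieveL_ok : ∀ p ∈ sieveL, 0 < p.1 ∧ ∀ r < p.1, p.2.testBit (r*r % p.1) = true := by
  decide +kernel

theorem sieve_sq (g N : ℤ) (h : g^2 = N) : sieve N = true := by
  unfold sieve
  rw [List.all_eq_true]
  intro p hp
  obtain ⟨hpos, hr⟩ := sieveL_ok p hp
  have hpos' : (0:ℤ) < p.1 := by exact_mod_cast hpos
  have h0 := Int.emod_nonneg g hpos'.ne'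
  have h1 := Int.emod_lt_of_pos g hpos'
  obtain ⟨r, hrr⟩ := Int.eq_ofNat_of_zero_le h0
  have h2 := hr r (by rw [hrr] at h1; exact_mod_cast h1)
  have h3 : N % (p.1:ℤ) = ((r*r % p.1 : ℕ) : ℤ) := by
    rw [← h, pow_two, Int.mul_emod, hrr]; push_cast; rfl
  rw [h3, Int.toNat_natCast]; exact h2

/-- Sieve all `H = r + 4 * j`, `j < n`. -/
def sieveLoop (c a0 r : ℤ) (exc : List ℤ) (n : ℕ) : Bool :=
  Nat.rec true (fun j ih => (!(sieve ((r + 4*(j:ℤ))^3 + c*a0^3)) || exc.contains (r + 4*(j:ℤ))) && ih) n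

theorem sieveLoop_succ (c a0 r : ℤ) (exc : List ℤ) (n : ℕ) : sieveLoop c a0 r exc (n+1) =
  ((!(sieve ((r + 4*(n:ℤ))^3 + c*a0^3)) || exc.contains (r + 4*(n:ℤ))) && sieveLoop c a0 r exc n) := rfl

theorem sieveLoop_spec (c a0 r : ℤ) (exc : List ℤ) (n : ℕ) (h : sieveLoop c a0 r exc n = true)
    (j : ℕ) (hj : j < n) (g : ℤ) (hg : g^2 = (r + 4*(j:ℤ))^3 + c*a0^3) : r + 4*(j:ℤ) ∈ exc := by
  induction n with
  | zero => omega
  | succ n ih =>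
    rw [sieveLoop_succ, Bool.and_eq_true, Bool.or_eq_true] at h
    by_cases hjn : j = n
    · subst hjn
      rcases h.1 with h1 | h1
      · rw [sieve_sq g _ hg] at h1; simp at h1
      · simpa using h1
    · exact ih h.2 (by omega)

theorem sieve_range (c a0 r : ℤ) (exc : List ℤ) (n : ℕ) (h : sieveLoop c a0 r exc n = true)
    (H : ℤ) (h0 : r ≤ H) (h1 : H < r + 4*n) (h2 : (H - r) % 4 = 0)
    (g : ℤ) (hg : g^2 = H^3 + c*a0^3) : H ∈ exc := by
  obtain ⟨j, hj⟩ : ∃ j : ℕ, H = r + 4*(j:ℤ) := ⟨((H-r)/4).toNat, by omega⟩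
  rw [hj]
  exact sieveLoop_spec c a0 r exc n h j (by omega) g (by rw [hg, hj])

/-- Exceptional Hessian values for the second equation. -/
def exc2 (a0 : ℤ) : List ℤ :=
  if a0 = -56 then [952] else if a0 = 5 then [165] else if a0 = 8 then [120]
  else if a0 = 24 then [504] else if a0 = 33 then [-495] else if a0 = 40 then [-380, -104, 520]
  else if a0 = 45 then [1485] else []

theorem small2 (X Y : ℤ) (h : Y^2 = X^3 + 4563) (hX : X % 4 = 1) : 497 ≤ X := by
  by_contra hlt
  have hlow : -19 ≤ X := by
    by_contra hh
    have : X ≤ -20 := by omega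
    nlinarith [sq_nonneg Y, mul_nonneg_of_nonpos_of_nonpos (show X + 20 ≤ 0 by linarith) (show X ≤ 0 by linarith), sq_nonneg X]
  have := sieve_range 4563 1 (-19) [] 129 (by decide +kernel) X hlow (by omega) (by omega) Y (by rw [h]; ring)
  simp at this

theorem stage1 (a0 H g : ℤ) (h1 : -70 < a0) (h2 : a0 < 56)
    (ha : (a0 % 4 = 1 ∧ H % 4 = 1) ∨ (a0 % 16 = 8 ∧ H % 4 = 0)) (hH1 : -2000 < H) (hH2 : H < 2000)
    (hg : g^2 = H^3 + 4563*a0^3) : H ∈ exc2 a0 := by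
  rcases ha with ⟨ha, hh⟩ | ⟨ha, hh⟩
  · have key : ∀ k : Fin 31, sieveLoop 4563 (-67 + 4*(k:ℤ)) (-2003) (exc2 (-67 + 4*(k:ℤ))) 1002 = true := by
      decide +kernel
    obtain ⟨k, hk⟩ : ∃ k : Fin 31, a0 = -67 + 4*(k:ℤ) :=
      ⟨⟨((a0+67)/4).toNat, by omega⟩, by simp; omega⟩
    have := key k
    rw [← hk] at this
    exact sieve_range _ _ _ _ _ this H (by omega) (by omega) (by omega) g hg
  · have key : ∀ k : Fin 7, sieveLoop 4563 (-56 + 16*(k:ℤ)) (-2000) (exc2 (-56 + 16*(k:ℤ))) 1002 = true := by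
      decide +kernel
    obtain ⟨k, hk⟩ : ∃ k : Fin 7, a0 = -56 + 16*(k:ℤ) :=
      ⟨⟨((a0+56)/16).toNat, by omega⟩, by simp; omega⟩
    have := key k
    rw [← hk] at this
    exact sieve_range _ _ _ _ _ this H (by omega) (by omega) (by omega) g hg

/-- No integral quartic form with given leading data. -/
def st2 (a0 H G : ℤ) : Bool := (List.range a0.natAbs).all fun k =>
  decide (((k:ℤ)^2 - H) % a0 ≠ 0) ||
  decide ((G + 3*a0*(k:ℤ)*(((k:ℤ)^2-H)/a0) - 2*(k:ℤ)^3) % a0^2 ≠ 0) ||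
  decide ((4*(k:ℤ)*((G + 3*a0*(k:ℤ)*(((k:ℤ)^2-H)/a0) - 2*(k:ℤ)^3)/a0^2) - 3*(((k:ℤ)^2-H)/a0)^2) % a0 ≠ 0)

theorem st2_spec (a0 a1 a2 a3 a4 H G : ℤ) (hs : st2 a0 H G = true) (h0 : 0 ≤ a1) (h1 : a1 < |a0|)
    (hH : a1^2 - a0*a2 = H) (hG : a0^2*a3-3*a0*a1*a2+2*a1^3 = G)
    (hI : a0*a4 - 4*a1*a3 + 3*a2^2 = 0) : False := by
  have hne : a0 ≠ 0 := by rintro rfl; simp at h1; omega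
  unfold st2 at hs
  rw [List.all_eq_true] at hs
  obtain ⟨k, hk⟩ := Int.eq_ofNat_of_zero_le h0
  have := hs k (by rw [List.mem_range]; rw [Int.abs_eq_natAbs] at h1; omega)
  rw [← hk] at this
  have e1 : a1^2 - H = a0*a2 := by linarith
  have e2 : G + 3*a0*a1*a2 - 2*a1^3 = a0^2*a3 := by linarith
  have e3 : 4*a1*a3 - 3*a2^2 = a0*a4 := by linarith
  rw [e1, Int.mul_ediv_cancel_left _ hne, e2, Int.mul_ediv_cancel_left _ (pow_ne_zero 2 hne), e3] at this
  simp at this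

theorem enum2 (a0 a1 a2 a3 a4 H : ℤ) (h1 : -70 < a0) (h2 : a0 < 56)
    (ha : (a0 % 4 = 1 ∧ H % 4 = 1) ∨ (a0 % 16 = 8 ∧ H % 4 = 0)) (hH1 : -2000 < H) (hH2 : H < 2000)
    (h3 : 0 ≤ a1) (h4 : a1 < |a0|) (hH : a1^2 - a0*a2 = H)
    (hI : a0*a4 - 4*a1*a3 + 3*a2^2 = 0)
    (hG : (a0^2*a3-3*a0*a1*a2+2*a1^3)^2 = 4*H^3 + 18252*a0^3) : False := by
  obtain ⟨G, hGG⟩ : ∃ G, a0^2*a3-3*a0*a1*a2+2*a1^3 = G := ⟨_, rfl⟩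
  rw [hGG] at hG
  have heven : Even G := by
    have : Even (G^2) := ⟨2*H^3 + 9126*a0^3, by rw [hG]; ring⟩
    exact (Int.even_pow.1 this).1
  obtain ⟨g, hg⟩ := heven
  have hg2 : g^2 = H^3 + 4563*a0^3 := by
    have : (2*g)^2 = 4*H^3 + 18252*a0^3 := by rw [← hG, hg]; ring
    linarith
  have hmem := stage1 a0 H g h1 h2 ha hH1 hH2 hg2
  have fin : ∀ r : ℤ, H^3 + 4563*a0^3 = r^2 → st2 a0 H (r+r) = true → st2 a0 H (-r + -r) = true → False := by
    intro r hr s1 s2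
    rw [hr] at hg2
    rcases sq_eq_sq_iff_eq_or_eq_neg.1 hg2 with e | e
    · exact st2_spec a0 a1 a2 a3 a4 H _ s1 h3 h4 hH (by rw [hGG, hg, e]) hI
    · exact st2_spec a0 a1 a2 a3 a4 H _ s2 h3 h4 hH (by rw [hGG, hg, e]) hI
  unfold exc2 at hmem
  split_ifs at hmem with c1 c2 c3 c4 c5 c6 c7
  · subst c1; simp at hmem; subst hmem
    exact fin 7840 (by norm_num) (by decide +kernel) (by decide +kernel)
  · subst c2; simp at hmem; subst hmem
    exact fin 2250 (by norm_num) (by decide +kernel) (by decide +kernel)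
  · subst c3; simp at hmem; subst hmem
    exact fin 2016 (by norm_num) (by decide +kernel) (by decide +kernel)
  · subst c4; simp at hmem; subst hmem
    exact fin 13824 (by norm_num) (by decide +kernel) (by decide +kernel)
  · subst c5; simp at hmem; subst hmem
    exact fin 6534 (by norm_num) (by decide +kernel) (by decide +kernel)
  · subst c6; simp at hmem
    rcases hmem with hmem | hmem | hmem <;> subst hmem
    · exact fin 15400 (by norm_num) (by decide +kernel) (by decide +kernel)
    · exact fin 17056 (by norm_num) (by decide +kernel) (by decide +kernel)
    · exact fin 20800 (by norm_num) (by decide +kernel) (by decide +kernel)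
  · subst c7; simp at hmem; subst hmem
    exact fin 60750 (by norm_num) (by decide +kernel) (by decide +kernel)
  · simp at hmem

theorem enum1 (a0 a1 a2 a3 a4 H : ℤ) (ha : a0 = 3 ∨ a0 = -4 ∨ a0 = -13)
    (hH1 : -200 < H) (hH2 : H < 200)
    (h3 : 0 ≤ a1) (h4 : a1 < |a0|) (hH : a1^2 - a0*a2 = H)
    (hI : a0*a4 - 4*a1*a3 + 3*a2^2 = 0)
    (hG : (a0^2*a3-3*a0*a1*a2+2*a1^3)^2 = 4*H^3 - 676*a0^3) :
    (a0 = 3 ∧ a1 = 0 ∧ a2 = -13 ∧ (a3 = 52 ∨ a3 = -52) ∧ a4 = -169) ∨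
    (a0 = -4 ∧ a1 = 0 ∧ a2 = 0 ∧ a4 = 0) ∨
    (a0 = -4 ∧ a1 = 2 ∧ a2 = 2 ∧ ((a3 = 10 ∧ a4 = -17) ∨ (a3 = -18 ∧ a4 = 39))) := by
  obtain ⟨G, hGG⟩ : ∃ G, a0^2*a3-3*a0*a1*a2+2*a1^3 = G := ⟨_, rfl⟩
  rw [hGG] at hG
  have heven : Even G := by
    have : Even (G^2) := ⟨2*H^3 - 338*a0^3, by rw [hG]; ring⟩
    exact (Int.even_pow.1 this).1
  obtain ⟨g, hg⟩ := heven
  have hg2 : g^2 = H^3 + (-169)*a0^3 := by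
    have : (2*g)^2 = 4*H^3 - 676*a0^3 := by rw [← hG, hg]; ring
    linarith
  have main : ∀ exc : List ℤ, (∀ k : Fin 4, sieveLoop (-169) a0 (-200 + (k:ℤ)) exc 101 = true) → H ∈ exc := by
    intro exc hexc
    obtain ⟨k, hk⟩ : ∃ k : Fin 4, (H - (-200 + (k:ℤ))) % 4 = 0 :=
      ⟨⟨((H+200)%4).toNat, by omega⟩, by simp; omega⟩
    have hk4 := k.2
    exact sieve_range _ _ _ _ _ (hexc k) H (by omega) (by omega) hk g hg2
  rcases ha with rfl | rfl | rfl
  · have := main [39] (by decide +kernel)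
    simp at this; subst this
    have e : g^2 = 234^2 := by rw [hg2]; norm_num
    simp at h4
    left
    have h0 : a1 = 0 := by interval_cases a1 <;> omega
    subst h0
    have h2 : a2 = -13 := by omega
    subst h2
    rcases sq_eq_sq_iff_eq_or_eq_neg.1 e with e | e <;> subst e <;> omega
  · have := main [0, 12] (by decide +kernel)
    simp at this
    right
    simp at h4
    rcases this with rfl | rfl
    · left
      have e : g^2 = 104^2 := by rw [hg2]; norm_num
      have : a1 = 0 ∨ a1 = 2 := by
        interval_cases a1 <;> omega
      rcases this with rfl | rfl
      · have h2 : a2 = 0 := by omega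
        subst h2
        omega
      · have h2 : a2 = -1 := by omega
        subst h2
        rcases sq_eq_sq_iff_eq_or_eq_neg.1 e with e | e <;> subst e <;> omega
    · right
      have e : g^2 = 112^2 := by rw [hg2]; norm_num
      have : a1 = 0 ∨ a1 = 2 := by
        interval_cases a1 <;> omega
      rcases this with rfl | rfl
      · have h2 : a2 = 3 := by omega
        subst h2
        rcases sq_eq_sq_iff_eq_or_eq_neg.1 e with e | e <;> subst e <;> omega
      · have h2 : a2 = 2 := by omega
        subst h2
        rcases sq_eq_sq_iff_eq_or_eq_neg.1 e with e | e <;> subst e <;> omega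
  · have := main [] (by decide +kernel)
    simp at this

theorem uw_bounds (u w : ℝ) (h : 3*(u^2+w^2)^2 ≤ 4) :
    |u^3*w| ≤ 4/9 ∧ |u*w^3| ≤ 4/9 ∧ u^4 ≤ 4/3 ∧ w^4 ≤ 4/3 ∧ u^2*w^2 ≤ 1/3 := by
  have h1 := sq_nonneg (u*w)
  refine ⟨abs_le.2 ⟨?_, ?_⟩, abs_le.2 ⟨?_, ?_⟩, ?_, ?_, ?_⟩
  · nlinarith [sq_nonneg (u^2+1.5*u*w-0.25*w^2), sq_nonneg (u*w+1.5*w^2), sq_nonneg (w^2)]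
  · nlinarith [sq_nonneg (u^2-1.5*u*w-0.25*w^2), sq_nonneg (u*w-1.5*w^2), sq_nonneg (w^2)]
  · nlinarith [sq_nonneg (w^2+1.5*u*w-0.25*u^2), sq_nonneg (u*w+1.5*u^2), sq_nonneg (u^2)]
  · nlinarith [sq_nonneg (w^2-1.5*u*w-0.25*u^2), sq_nonneg (u*w-1.5*u^2), sq_nonneg (u^2)]
  · nlinarith [sq_nonneg (w^2)]
  · nlinarith [sq_nonneg (u^2)]
  · nlinarith [sq_nonneg (u^2-w^2)]

theorem mul_bound (c C x B : ℝ) (hc : |c| ≤ C) (hx : |x| ≤ B) : |c*x| ≤ C*B := by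
  rw [abs_mul]
  exact mul_le_mul hc hx (abs_nonneg _) ((abs_nonneg _).trans hc)

set_option maxHeartbeats 2000000 in
theorem bounds2 (X Y : ℤ) (h : Y^2 = X^3 + 4563) (hY : 0 < Y) (hX : 497 ≤ X) :
    ∃ m b n d : ℤ, m*d - n*b = 1 ∧ -70 < qf 1 0 (-X) (2*Y) (-3*X^2) m b ∧
      qf 1 0 (-X) (2*Y) (-3*X^2) m b < 56 ∧ -2000 < qh 1 0 (-X) (2*Y) (-3*X^2) m b ∧
      qh 1 0 (-X) (2*Y) (-3*X^2) m b < 2000 := by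
  have hXR : (497:ℝ) ≤ X := by exact_mod_cast hX
  have hYR : (0:ℝ) < Y := by exact_mod_cast hY
  have hR : (Y:ℝ)^2 = (X:ℝ)^3 + 4563 := by exact_mod_cast h
  obtain ⟨t, ht, htX⟩ : ∃ t : ℝ, 0 < t ∧ t^2 = X :=
    ⟨Real.sqrt X, Real.sqrt_pos.2 (by linarith), Real.sq_sqrt (by linarith)⟩
  obtain ⟨s, hs, hst⟩ : ∃ s : ℝ, 0 < s ∧ s^2 = t/24 :=
    ⟨Real.sqrt (t/24), Real.sqrt_pos.2 (by linarith), Real.sq_sqrt (by linarith)⟩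
  obtain ⟨m, b, n, d, hdet, u, w, hu, hw, huw⟩ := reduce_uw t (t/24) s hs hst
  have ht3 : 0 < t^3 := by positivity
  have hYt : t^3 ≤ Y := by
    rw [← sq_le_sq₀ ht3.le hYR.le, hR, ← htX]; nlinarith
  obtain ⟨κ, hκ⟩ : ∃ κ : ℝ, κ = (Y - t^3)*t^3 := ⟨_, rfl⟩
  have hκ0 : 0 ≤ κ := by rw [hκ]; exact mul_nonneg (by linarith) ht3.le
  have hκ1 : κ ≤ 4563/2 := by
    have e : κ * (t^3 + Y) = 4563 * t^3 := by
      rw [hκ]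
      have : (X:ℝ)^3 = t^6 := by rw [← htX]; ring
      rw [this] at hR
      linear_combination t^3*hR
    have : κ * (2*t^3) ≤ 4563*t^3 := by rw [← e]; nlinarith
    by_contra hh
    push Not at hh
    nlinarith
  obtain ⟨q, hq⟩ : ∃ q : ℝ, q = 1/t^2 := ⟨_, rfl⟩
  have hq0 : 0 < q := by rw [hq]; positivity
  have hq1 : q ≤ 1/497 := by
    rw [hq]; apply one_div_le_one_div_of_le (by norm_num); rw [htX]; exact hXR
  have hYe : (Y:ℝ) = t^3 + κ/t^3 := by rw [hκ]; field_simp; ring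
  obtain ⟨e, he⟩ : ∃ e : ℝ, e = (m:ℝ) - t*b := ⟨_, rfl⟩
  have hm : (m:ℝ) = t*b + e := by rw [he]; ring
  rw [← he] at hu
  have hbe : b*e = u*w := by rw [hu, hw]; field_simp
  have hbb : (b:ℝ)^2 = w^2*(t/24) := by rw [hw, ← hst]; ring
  have hee : e^2 = 24*u^2/t := by
    rw [hu, div_pow, hst]; field_simp
  have hf : (qf 1 0 (-X) (2*Y) (-3*X^2) m b : ℝ) =
      576*q*u^4 + 96*(u^3*w) + κ/72*w^4 + κ*q/3*(u*w^3) := by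
    have h1 : (qf 1 0 (-X) (2*Y) (-3*X^2) m b : ℝ) =
      (e^2)^2 + 4*t*(b*e)*e^2 + 8*(κ/t^3)*t*((b:ℝ)^2)^2 + 8*(κ/t^3)*b^2*(b*e) := by
      unfold qf; push_cast; rw [hm, hYe, ← htX]; ring
    rw [h1, hbe, hbb, hee, hq]; field_simp; ring
  have hH : (qh 1 0 (-X) (2*Y) (-3*X^2) m b : ℝ) =
      576*u^4 - 2/3*κ*(u*w^3) - 12*κ*q*(u^2*w^2) - 96*κ*q^2*(u^3*w) + κ^2*q^2/144*w^4 := by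
    have h1 : (qh 1 0 (-X) (2*Y) (-3*X^2) m b : ℝ) =
      t^2*(e^2)^2 - 16*(κ/t^3)*t^2*b^2*(b*e) - 12*(κ/t^3)*t*(b*e)^2 - 4*(κ/t^3)*(b*e)*e^2
        + 4*(κ/t^3)^2*((b:ℝ)^2)^2 := by
      unfold qh; push_cast; rw [hm, hYe, ← htX]; field_simp; ring
    rw [h1, hbe, hbb, hee, hq]; field_simp; ring
  obtain ⟨b1, b2, b3, b4, b5⟩ := uw_bounds u w huw
  have n1 : 0 ≤ u^4 := by positivity
  have n2 : 0 ≤ w^4 := by positivity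
  have n3 : 0 ≤ u^2*w^2 := by positivity
  have hκq0 : 0 ≤ κ*q := by positivity
  have hκq : κ*q ≤ 4.6 := by
    have := mul_le_mul hκ1 hq1 hq0.le (by norm_num)
    linarith
  have hκqq : κ*q^2 ≤ 0.01 := by
    have := mul_le_mul hκq hq1 hq0.le (by norm_num)
    rw [pow_two, ← mul_assoc]; linarith
  have hκqq0 : 0 ≤ κ*q^2 := by positivity
  have t1 : 576*q*u^4 ≤ 1.6 := by
    have := mul_le_mul hq1 b3 n1 (by norm_num)
    linarith
  have t1' : 0 ≤ 576*q*u^4 := by positivity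
  have t2 : |κ*q/3*(u*w^3)| ≤ 4.6/3*(4/9) :=
    mul_bound _ _ _ _ (by rw [abs_of_nonneg (by positivity)]; linarith) b2
  have t3 : 0 ≤ κ/72*w^4 := by positivity
  have t3' : κ/72*w^4 ≤ 31.7*w^4 := mul_le_mul_of_nonneg_right (by linarith) n2
  have t4 : 96*(u^3*w) + 31.7*w^4 ≤ 48 := by
    linarith [sq_nonneg (6*u^2-8*(u*w)), show (6*u^2-8*(u*w))^2 = 36*u^4 - 96*(u^3*w) + 64*(u^2*w^2) by ring, show (u^2+w^2)^2 = u^4 + 2*(u^2*w^2) + w^4 by ring]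
  have t5 : |2/3*κ*(u*w^3)| ≤ 1521*(4/9) :=
    mul_bound _ _ _ _ (by rw [abs_of_nonneg (by positivity)]; linarith) b2
  have t6 : 12*κ*q*(u^2*w^2) ≤ 12*4.6*(1/3) := by
    have : κ*q*(u^2*w^2) ≤ 4.6*(1/3) := mul_le_mul hκq b5 n3 (by norm_num)
    linarith
  have t6' : 0 ≤ 12*κ*q*(u^2*w^2) := by positivity
  have t7 : |96*κ*q^2*(u^3*w)| ≤ 0.96*(4/9) :=
    mul_bound _ _ _ _ (by rw [abs_of_nonneg (by positivity)]; linarith) b1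
  have t8 : κ^2*q^2/144*w^4 ≤ 1 := by
    have e1 : κ^2*q^2 ≤ 4.6*4.6 := by
      have := mul_le_mul hκq hκq hκq0 (by norm_num)
      linarith [this, show κ*q*(κ*q) = κ^2*q^2 by ring]
    have e2 : κ^2*q^2*w^4 ≤ 4.6*4.6*(4/3) := mul_le_mul e1 b4 n2 (by norm_num)
    linarith
  have t8' : 0 ≤ κ^2*q^2/144*w^4 := by positivity
  rw [abs_le] at b1 t2 t5 t7
  refine ⟨m, b, n, d, hdet, ?_, ?_, ?_, ?_⟩
  · have : (-70:ℝ) < (qf 1 0 (-X) (2*Y) (-3*X^2) m b : ℝ) := by rw [hf]; linarith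
    exact_mod_cast this
  · have : (qf 1 0 (-X) (2*Y) (-3*X^2) m b : ℝ) < 56 := by rw [hf]; linarith
    exact_mod_cast this
  · have : (-2000:ℝ) < (qh 1 0 (-X) (2*Y) (-3*X^2) m b : ℝ) := by rw [hH]; linarith
    exact_mod_cast this
  · have : (qh 1 0 (-X) (2*Y) (-3*X^2) m b : ℝ) < 2000 := by rw [hH]; linarith
    exact_mod_cast this

set_option maxHeartbeats 2000000 in
theorem bounds1 (x z : ℤ) (h : 3*z^2 + 1 = 13*x^3) (hz : 0 < z) (hx : 14 ≤ x) :
    ∃ m b n d : ℤ, m*d - n*b = 1 ∧ -17 < qf 3 0 (-13*x) (26*z) (-169*x^2) m b ∧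
      qf 3 0 (-13*x) (26*z) (-169*x^2) m b < 27 ∧ -200 < qh 3 0 (-13*x) (26*z) (-169*x^2) m b ∧
      qh 3 0 (-13*x) (26*z) (-169*x^2) m b < 200 := by
  have hXR : (14:ℝ) ≤ x := by exact_mod_cast hx
  have hYR : (0:ℝ) < z := by exact_mod_cast hz
  have hR : 3*(z:ℝ)^2 + 1 = 13*(x:ℝ)^3 := by exact_mod_cast h
  obtain ⟨t, ht, htX⟩ : ∃ t : ℝ, 0 < t ∧ t^2 = 13*x/3 :=
    ⟨Real.sqrt (13*x/3), Real.sqrt_pos.2 (by linarith), Real.sq_sqrt (by linarith)⟩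
  obtain ⟨s, hs, hst⟩ : ∃ s : ℝ, 0 < s ∧ s^2 = 3*t/8 :=
    ⟨Real.sqrt (3*t/8), Real.sqrt_pos.2 (by linarith), Real.sq_sqrt (by linarith)⟩
  obtain ⟨m, b, n, d, hdet, u, w, hu, hw, huw⟩ := reduce_uw t (3*t/8) s hs hst
  have ht3 : 0 < t^3 := by positivity
  have ht2 : 60 ≤ t^2 := by rw [htX]; linarith
  have hxt : (x:ℝ) = 3*t^2/13 := by rw [htX]; ring
  have hT2 : (13*(z:ℝ)/3)^2 = (t^3)^2 - 169/27 := by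
    rw [hxt] at hR
    linear_combination (169/27)*hR
  have ht6 : 1000 ≤ (t^3)^2 := by
    have : (t^3)^2 = t^2*t^2*t^2 := by ring
    rw [this]; nlinarith [mul_nonneg (show 0 ≤ t^2-60 by linarith) (show 0 ≤ t^2 by positivity)]
  have hYt : 13*(z:ℝ)/3 ≤ t^3 := by
    rw [← sq_le_sq₀ (by positivity) ht3.le, hT2]; linarith
  have hYt2 : 0.99*t^3 ≤ 13*(z:ℝ)/3 := by
    rw [← sq_le_sq₀ (by positivity) (by positivity), hT2]; nlinarith
  obtain ⟨κ, hκ⟩ : ∃ κ : ℝ, κ = (t^3 - 13*z/3)*t^3 := ⟨_, rfl⟩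
  have hκ0 : 0 ≤ κ := by rw [hκ]; exact mul_nonneg (by linarith) ht3.le
  have hκ1 : κ ≤ 3.15 := by
    have e : κ * (t^3 + 13*z/3) = 169/27 * t^3 := by
      rw [hκ]
      linear_combination (-t^3)*hT2
    have : κ * (1.99*t^3) ≤ 169/27*t^3 := by rw [← e]; nlinarith
    by_contra hh
    push Not at hh
    nlinarith
  obtain ⟨q, hq⟩ : ∃ q : ℝ, q = 1/t^2 := ⟨_, rfl⟩
  have hq0 : 0 < q := by rw [hq]; positivity
  have hq1 : q ≤ 1/60 := by
    rw [hq]; exact one_div_le_one_div_of_le (by norm_num) ht2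
  have hYe : (z:ℝ) = 3*(t^3 - κ/t^3)/13 := by rw [hκ]; field_simp; ring
  obtain ⟨e, he⟩ : ∃ e : ℝ, e = (m:ℝ) - t*b := ⟨_, rfl⟩
  have hm : (m:ℝ) = t*b + e := by rw [he]; ring
  rw [← he] at hu
  have hbe : b*e = u*w := by rw [hu, hw]; field_simp
  have hbb : (b:ℝ)^2 = w^2*(3*t/8) := by rw [hw, ← hst]; ring
  have hee : e^2 = 8*u^2/(3*t) := by
    rw [hu, div_pow, hst]; field_simp
  have hf : (qf 3 0 (-13*x) (26*z) (-169*x^2) m b : ℝ) =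
      64/3*q*u^4 + 32*(u^3*w) - 27/8*κ*w^4 - 9*κ*q*(u*w^3) := by
    have h1 : (qf 3 0 (-13*x) (26*z) (-169*x^2) m b : ℝ) =
      3*((e^2)^2 + 4*t*(b*e)*e^2 - 8*(κ/t^3)*t*((b:ℝ)^2)^2 - 8*(κ/t^3)*b^2*(b*e)) := by
      unfold qf; push_cast; rw [hm, hYe, hxt]; ring
    rw [h1, hbe, hbb, hee, hq]; field_simp; ring
  have hH : (qh 3 0 (-13*x) (26*z) (-169*x^2) m b : ℝ) =
      64*u^4 + 54*κ*(u*w^3) + 108*κ*q*(u^2*w^2) + 96*κ*q^2*(u^3*w) + 81/16*(κ^2*q^2)*w^4 := by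
    have h1 : (qh 3 0 (-13*x) (26*z) (-169*x^2) m b : ℝ) =
      9*(t^2*(e^2)^2 + 16*(κ/t^3)*t^2*b^2*(b*e) + 12*(κ/t^3)*t*(b*e)^2 + 4*(κ/t^3)*(b*e)*e^2
        + 4*(κ/t^3)^2*((b:ℝ)^2)^2) := by
      unfold qh; push_cast; rw [hm, hYe, hxt]; field_simp; ring
    rw [h1, hbe, hbb, hee, hq]; field_simp; ring
  obtain ⟨b1, b2, b3, b4, b5⟩ := uw_bounds u w huw
  have n1 : 0 ≤ u^4 := by positivity
  have n2 : 0 ≤ w^4 := by positivity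
  have n3 : 0 ≤ u^2*w^2 := by positivity
  have hκq0 : 0 ≤ κ*q := by positivity
  have hκq : κ*q ≤ 0.0526 := by
    have := mul_le_mul hκ1 hq1 hq0.le (by norm_num)
    linarith
  have hκqq : κ*q^2 ≤ 0.01 := by
    have := mul_le_mul hκq hq1 hq0.le (by norm_num)
    rw [pow_two, ← mul_assoc]; linarith
  have hκqq0 : 0 ≤ κ*q^2 := by positivity
  have t1 : 64/3*q*u^4 ≤ 0.5 := by
    have := mul_le_mul hq1 b3 n1 (by norm_num)
    linarith
  have t1' : 0 ≤ 64/3*q*u^4 := by positivity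
  have t2 : |9*κ*q*(u*w^3)| ≤ 0.48*(4/9) :=
    mul_bound _ _ _ _ (by rw [abs_of_nonneg (by positivity)]; linarith) b2
  have t3 : 0 ≤ 27/8*κ*w^4 := by positivity
  have t3' : 27/8*κ*w^4 ≤ 10.64*w^4 := mul_le_mul_of_nonneg_right (by linarith) n2
  have t4 : -16 ≤ 32*(u^3*w) - 10.64*w^4 := by
    linarith [sq_nonneg (u^2+4/3*(u*w)), show (u^2+4/3*(u*w))^2 = u^4 + 8/3*(u^3*w) + 16/9*(u^2*w^2) by ring, show (u^2+w^2)^2 = u^4 + 2*(u^2*w^2) + w^4 by ring]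
  have t5 : |54*κ*(u*w^3)| ≤ 171*(4/9) :=
    mul_bound _ _ _ _ (by rw [abs_of_nonneg (by positivity)]; linarith) b2
  have t6 : 108*κ*q*(u^2*w^2) ≤ 108*0.0526*(1/3) := by
    have : κ*q*(u^2*w^2) ≤ 0.0526*(1/3) := mul_le_mul hκq b5 n3 (by norm_num)
    linarith
  have t6' : 0 ≤ 108*κ*q*(u^2*w^2) := by positivity
  have t7 : |96*κ*q^2*(u^3*w)| ≤ 0.96*(4/9) :=
    mul_bound _ _ _ _ (by rw [abs_of_nonneg (by positivity)]; linarith) b1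
  have t8 : 81/16*(κ^2*q^2)*w^4 ≤ 7 := by
    have e1 : κ^2*q^2 ≤ 1 := by
      have := mul_le_mul hκq hκq hκq0 (by norm_num)
      linarith [this, show κ*q*(κ*q) = κ^2*q^2 by ring]
    have e2 : κ^2*q^2*w^4 ≤ 1*(4/3) := mul_le_mul e1 b4 n2 (by norm_num)
    linarith
  have t8' : 0 ≤ 81/16*(κ^2*q^2)*w^4 := by positivity
  rw [abs_le] at b1 t2 t5 t7
  refine ⟨m, b, n, d, hdet, ?_, ?_, ?_, ?_⟩
  · have : (-17:ℝ) < (qf 3 0 (-13*x) (26*z) (-169*x^2) m b : ℝ) := by rw [hf]; linarith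
    exact_mod_cast this
  · have : (qf 3 0 (-13*x) (26*z) (-169*x^2) m b : ℝ) < 27 := by rw [hf]; linarith
    exact_mod_cast this
  · have : (-200:ℝ) < (qh 3 0 (-13*x) (26*z) (-169*x^2) m b : ℝ) := by rw [hH]; linarith
    exact_mod_cast this
  · have : (qh 3 0 (-13*x) (26*z) (-169*x^2) m b : ℝ) < 200 := by rw [hH]; linarith
    exact_mod_cast this

theorem odd_sq_form (m : ℤ) (h : m % 2 = 1) : ∃ p, m^2 = 8*p+1 := by
  have h8 : m % 8 = 1 ∨ m % 8 = 3 ∨ m % 8 = 5 ∨ m % 8 = 7 := by omega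
  obtain ⟨i, hi⟩ : ∃ i, m = 8*i + m % 8 := ⟨m/8, by omega⟩
  rcases h8 with h8 | h8 | h8 | h8 <;> rw [h8] at hi <;> rw [hi]
  · exact ⟨8*i^2+2*i, by ring⟩
  · exact ⟨8*i^2+6*i+1, by ring⟩
  · exact ⟨8*i^2+10*i+3, by ring⟩
  · exact ⟨8*i^2+14*i+6, by ring⟩

theorem parity_cases (m b n d : ℤ) (h : m*d - n*b = 1) :
    (m % 2 = 1 ∧ b % 2 = 0) ∨ (m % 2 = 0 ∧ b % 2 = 1) ∨ (m % 2 = 1 ∧ b % 2 = 1) := by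
  have h1 : m % 2 = 0 ∨ m % 2 = 1 := by omega
  have h2 : b % 2 = 0 ∨ b % 2 = 1 := by omega
  rcases h1 with h1 | h1 <;> rcases h2 with h2 | h2 <;> simp_all
  obtain ⟨i, hi⟩ : ∃ i, m = 2*i := ⟨m/2, by omega⟩
  obtain ⟨j, hj⟩ : ∃ j, b = 2*j := ⟨b/2, by omega⟩
  have : 2*(i*d - n*j) = 1 := by rw [hi, hj] at h; linarith
  omega

theorem res2 (X Y m b n d : ℤ) (hX : X % 4 = 1) (hY : Y % 2 = 0) (hdet : m*d - n*b = 1) :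
    (qf 1 0 (-X) (2*Y) (-3*X^2) m b % 4 = 1 ∧ qh 1 0 (-X) (2*Y) (-3*X^2) m b % 4 = 1) ∨
    (qf 1 0 (-X) (2*Y) (-3*X^2) m b % 16 = 8 ∧ qh 1 0 (-X) (2*Y) (-3*X^2) m b % 4 = 0) := by
  obtain ⟨k, hk⟩ : ∃ k, X = 4*k+1 := ⟨X/4, by omega⟩
  obtain ⟨l, hl⟩ : ∃ l, Y = 2*l := ⟨Y/2, by omega⟩
  rcases parity_cases m b n d hdet with ⟨hm, hb⟩ | ⟨hm, hb⟩ | ⟨hm, hb⟩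
  · left
    obtain ⟨p, hp⟩ := odd_sq_form m hm
    obtain ⟨j, hj⟩ : ∃ j, b = 2*j := ⟨b/2, by omega⟩
    constructor
    · have : qf 1 0 (-X) (2*Y) (-3*X^2) m b = (m^2)^2 + 4*(-6*X*m^2*j^2 + 8*2*Y*m*j^3 - 12*X^2*j^4) := by
        unfold qf; rw [hj]; ring
      rw [this, hp]; ring_nf; omega
    · have : qh 1 0 (-X) (2*Y) (-3*X^2) m b = X*(m^2)^2 + 4*(-2*Y*m^3*j + 6*X^2*m^2*j^2 - 8*X*Y*m*j^3 + 4*(4*Y^2-3*X^3)*j^4) := by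
        unfold qh; rw [hj]; ring
      rw [this, hp, hk]; ring_nf; omega
  · left
    obtain ⟨p, hp⟩ := odd_sq_form b hb
    obtain ⟨j, hj⟩ : ∃ j, m = 2*j := ⟨m/2, by omega⟩
    constructor
    · have : qf 1 0 (-X) (2*Y) (-3*X^2) m b = -3*X^2*(b^2)^2 + 4*(4*j^4 - 6*X*j^2*b^2 + 4*Y*j*b^3) := by
        unfold qf; rw [hj]; ring
      rw [this, hp, hk]; ring_nf; omega
    · have : qh 1 0 (-X) (2*Y) (-3*X^2) m b = -3*X^3*(b^2)^2 + 4*(4*X*j^4 - 8*Y*j^3*b + 6*X^2*j^2*b^2 - 2*X*Y*j*b^3 + Y^2*b^4) := by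
        unfold qh; rw [hj]; ring
      rw [this, hp, hk]; ring_nf; omega
  · right
    obtain ⟨p, hp⟩ := odd_sq_form m hm
    obtain ⟨r, hr⟩ := odd_sq_form b hb
    constructor
    · have : qf 1 0 (-X) (2*Y) (-3*X^2) m b = (m^2)^2 - 6*X*m^2*b^2 - 3*X^2*(b^2)^2 + 16*(l*(m*b^3)) := by
        unfold qf; rw [hl]; ring
      rw [this, hp, hr, hk]
      generalize l*(m*b^3) = A
      ring_nf; omega
    · have : qh 1 0 (-X) (2*Y) (-3*X^2) m b = X*(m^2)^2 + 6*X^2*m^2*b^2 - 3*X^3*(b^2)^2 + 4*(-Y*m^3*b - X*Y*m*b^3 + Y^2*b^4) := by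
        unfold qh; ring
      rw [this, hp, hr, hk]
      generalize (-Y*m^3*b - (4*k+1)*Y*m*b^3 + Y^2*b^4) = A
      ring_nf; omega

theorem mod8_2 : ∀ X Y : ZMod 8, Y^2 = X^3 + 4563 → X*2 = 2 ∧ Y*4 = 0 := by decide

theorem par2 (X Y : ℤ) (h : Y^2 = X^3 + 4563) : X % 4 = 1 ∧ Y % 2 = 0 := by
  obtain ⟨h1, h2⟩ := mod8_2 X Y (by exact_mod_cast congrArg (Int.cast : ℤ → ZMod 8) h)
  have e1 : ((X*2 - 2 : ℤ) : ZMod 8) = 0 := by push_cast; rw [h1]; ring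
  have e2 : ((Y*4 : ℤ) : ZMod 8) = 0 := by push_cast; exact h2
  rw [ZMod.intCast_zmod_eq_zero_iff_dvd] at e1 e2
  push_cast at e1 e2
  omega

theorem no2_pos (X Y : ℤ) (h : Y^2 = X^3 + 4563) (hY : 0 < Y) : False := by
  obtain ⟨hX4, hY2⟩ := par2 X Y h
  have hX := small2 X Y h hX4
  obtain ⟨m, b, n, d, hdet, f1, f2, f3, f4⟩ := bounds2 X Y h hY hX
  have hres := res2 X Y m b n d hX4 hY2 hdet
  obtain ⟨a0, a1, a2, a3, a4, n', d', ha0, _, h0, h1, hH, hI, hG, _, _⟩ :=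
    form_red 1 0 (-X) (2*Y) (-3*X^2) (-18252) m b n d hdet (by ring)
      (by linear_combination (-4)*h) (by omega)
  rw [← ha0, ← hH] at hres
  rw [← ha0] at f1 f2
  rw [← hH] at f3 f4
  exact enum2 a0 a1 a2 a3 a4 _ f1 f2 hres f3 f4 h0 h1 rfl hI (by rw [hG]; ring)

theorem no2 (X Y : ℤ) (h : Y^2 = X^3 + 4563) : False := by
  rcases lt_trichotomy Y 0 with hY | hY | hY
  · exact no2_pos X (-Y) (by rw [neg_sq]; exact h) (by linarith)
  · have := (par2 X Y h).1
    have := small2 X Y h this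
    rw [hY] at h
    nlinarith [sq_nonneg X]
  · exact no2_pos X Y h hY

theorem res1 (x z m b n d : ℤ) (hx : x % 4 = 1) (hz : z % 2 = 0) (hdet : m*d - n*b = 1) :
    qf 3 0 (-13*x) (26*z) (-169*x^2) m b % 8 = 3 ∨ qf 3 0 (-13*x) (26*z) (-169*x^2) m b % 8 = 7 ∨
    qf 3 0 (-13*x) (26*z) (-169*x^2) m b % 16 = 12 := by
  obtain ⟨k, hk⟩ : ∃ k, x = 4*k+1 := ⟨x/4, by omega⟩
  obtain ⟨l, hl⟩ : ∃ l, z = 2*l := ⟨z/2, by omega⟩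
  rcases parity_cases m b n d hdet with ⟨hm, hb⟩ | ⟨hm, hb⟩ | ⟨hm, hb⟩
  · left
    obtain ⟨p, hp⟩ := odd_sq_form m hm
    obtain ⟨j, hj⟩ : ∃ j, b = 2*j := ⟨b/2, by omega⟩
    have : qf 3 0 (-13*x) (26*z) (-169*x^2) m b = 3*(m^2)^2 + 8*(-39*x*m^2*j^2 + 104*z*m*j^3 - 338*x^2*j^4) := by
      unfold qf; rw [hj]; ring
    rw [this]
    generalize (-39*x*m^2*j^2 + 104*z*m*j^3 - 338*x^2*j^4) = A
    rw [hp]; ring_nf; omega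
  · right; left
    obtain ⟨p, hp⟩ := odd_sq_form b hb
    obtain ⟨j, hj⟩ : ∃ j, m = 2*j := ⟨m/2, by omega⟩
    have : qf 3 0 (-13*x) (26*z) (-169*x^2) m b = -169*x^2*(b^2)^2 + 8*(6*j^4 - 39*x*j^2*b^2 + 26*z*j*b^3) := by
      unfold qf; rw [hj]; ring
    rw [this]
    generalize (6*j^4 - 39*x*j^2*b^2 + 26*z*j*b^3) = A
    rw [hp, hk]; ring_nf; omega
  · right; right
    obtain ⟨p, hp⟩ := odd_sq_form m hm
    obtain ⟨r, hr⟩ := odd_sq_form b hb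
    have : qf 3 0 (-13*x) (26*z) (-169*x^2) m b = 3*(m^2)^2 - 78*x*m^2*b^2 - 169*x^2*(b^2)^2 + 16*(13*l*(m*b^3)) := by
      unfold qf; rw [hl]; ring
    rw [this]
    generalize 13*l*(m*b^3) = A
    rw [hp, hr, hk]; ring_nf; omega

theorem mod13_aux : ∀ m : ZMod 13, 3*m^4 = 0 ∨ 3*m^4 = 1 ∨ 3*m^4 = 3 ∨ 3*m^4 = 9 := by decide

theorem res13 (x z m b : ℤ) : qf 3 0 (-13*x) (26*z) (-169*x^2) m b % 13 = 0 ∨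
    qf 3 0 (-13*x) (26*z) (-169*x^2) m b % 13 = 1 ∨ qf 3 0 (-13*x) (26*z) (-169*x^2) m b % 13 = 3 ∨
    qf 3 0 (-13*x) (26*z) (-169*x^2) m b % 13 = 9 := by
  have h1 : qf 3 0 (-13*x) (26*z) (-169*x^2) m b = 3*m^4 + 13*(-6*x*m^2*b^2 + 8*z*m*b^3 - 13*x^2*b^4) := by
    unfold qf; ring
  have h2 : ∀ c : ℤ, ((3:ZMod 13)*(m:ZMod 13)^4 = (c:ZMod 13)) → (3*m^4) % 13 = c % 13 := by
    intro c hc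
    have := (ZMod.intCast_eq_intCast_iff' (3*m^4) c 13).1 (by push_cast; exact hc)
    exact_mod_cast this
  rcases mod13_aux m with h | h | h | h
  · have := h2 0 (by simpa using h); omega
  · have := h2 1 (by simpa using h); omega
  · have := h2 3 (by simpa using h); omega
  · have := h2 9 (by simpa using h); omega

theorem three_dvd_b (x z m b n d k : ℤ) (hx : x % 3 = 1) (hdet : m*d - n*b = 1)
    (h0 : qf 3 0 (-13*x) (26*z) (-169*x^2) m b = 3)
    (h1 : qf 3 0 (-13*x) (26*z) (-169*x^2) (m+3*n) (b+3*d) = 3 + 9*k) : 3 ∣ b := by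
  unfold qf at h0 h1
  obtain ⟨R, hR⟩ : ∃ R, R = 3*(6*m^2*n^2+12*m*n^3+9*n^4) - 78*x*(m^2*d^2+n^2*b^2+4*m*n*b*d+6*(m*n*d^2+n^2*b*d)+9*n^2*d^2) + 104*z*(3*n*b^2*d+3*m*b*d^2+3*m*d^3+9*n*b*d^2+9*n*d^3) - 169*x^2*(6*b^2*d^2+12*b*d^3+9*d^4) := ⟨_, rfl⟩
  have e2 : (12*m^3*n - 156*x*(m*n*b^2+m^2*b*d) + 104*z*(n*b^3+3*m*b^2*d) - 676*x^2*b^3*d) = 3*(k - R) := by rw [hR]; linarith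
  have e3 : x^2*b^3 = 3*((3*m^4*n - 52*x*m*(m*n*b^2+m^2*b*d) + 26*x*n*m^2*b^2 + 104*z*m^2*b^2*d - 225*x^2*m*b^3*d + 56*x^2*n*b^4) + n - m*(k - R)) := by
    linear_combination (-m)*e2 + n*h0 - x^2*b^3*hdet
  have hp : Prime (3:ℤ) := Int.prime_three
  have h3 : (3:ℤ) ∣ x^2*b^3 := ⟨_, e3⟩
  rcases hp.dvd_or_dvd h3 with h | h
  · have := hp.dvd_of_dvd_pow h; omega
  · exact hp.dvd_of_dvd_pow h

theorem solve_g1 (p q : ℤ) (hq : 3 ∣ q) (h : 3*p^4 - 78*p^2*q^2 + 208*p*q^3 - 169*q^4 = 3) : q = 0 := by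
  obtain ⟨r, hr⟩ : ∃ r, q = 3*r := ⟨q/3, by omega⟩
  have := thue p r (by rw [hr] at h; linarith)
  rw [hr, this]; rfl

theorem eq1_pos (x z : ℤ) (h : 3*z^2 + 1 = 13*x^3) (hz2 : z % 2 = 0) (hz : 0 < z) : x = 1 := by
  have hx4 : x % 4 = 1 := by
    obtain ⟨l, hl⟩ : ∃ l, z = 2*l := ⟨z/2, by omega⟩
    have h4 : x % 4 = 0 ∨ x % 4 = 1 ∨ x % 4 = 2 ∨ x % 4 = 3 := by omega
    obtain ⟨i, hi⟩ : ∃ i, x = 4*i + x % 4 := ⟨x/4, by omega⟩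
    rw [hl] at h
    rcases h4 with h4 | h4 | h4 | h4
    · rw [h4] at hi; rw [hi] at h; ring_nf at h; omega
    · exact h4
    · rw [h4] at hi; rw [hi] at h; ring_nf at h; omega
    · rw [h4] at hi; rw [hi] at h; ring_nf at h; omega
  have hx0 : 0 < x := by
    by_contra hh
    have h1 : x ≤ 0 := by omega
    have : x^3 ≤ 0 := by nlinarith [sq_nonneg x]
    nlinarith [sq_nonneg z]
  by_cases hsm : x < 14
  · have : x = 1 ∨ x = 5 ∨ x = 9 ∨ x = 13 := by omega
    rcases this with rfl | rfl | rfl | rfl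
    · rfl
    · omega
    · omega
    · have hz1 : z ≤ 97 := by nlinarith
      have hz3 : 98 ≤ z := by nlinarith
      omega
  · obtain ⟨m, b, n, d, hdet, f1, f2, f3, f4⟩ := bounds1 x z h hz (by omega)
    have hres := res1 x z m b n d hx4 hz2 hdet
    have hres13 := res13 x z m b
    obtain ⟨a0, a1, a2, a3, a4, n', d', ha0, hdet', h0, h1, hH, hI, hG, hF, hHH⟩ :=
      form_red 3 0 (-13*x) (26*z) (-169*x^2) 676 m b n d hdet (by ring)
        (by linear_combination (-676)*h) (by omega)
    rw [← ha0] at f1 f2 hres hres13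
    rw [← hH] at f3 f4
    have ha : a0 = 3 ∨ a0 = -4 ∨ a0 = -13 := by omega
    have key : ∀ p q, qf a0 a1 a2 a3 a4 p q % 13 = 0 ∨ qf a0 a1 a2 a3 a4 p q % 13 = 1 ∨
        qf a0 a1 a2 a3 a4 p q % 13 = 3 ∨ qf a0 a1 a2 a3 a4 p q % 13 = 9 := by
      intro p q; rw [← hF p q]; exact res13 _ _ _ _
    rcases enum1 a0 a1 a2 a3 a4 _ ha f3 f4 h0 h1 rfl hI (by rw [hG]) with hc | hc | hc
    · obtain ⟨c0, c1, c2, c3, c4⟩ := hc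
      have F1 := hF d' (-b)
      have H1 := hHH d' (-b)
      have e1 : m*d' + n'*(-b) = 1 := by linarith
      have e2 : b*d' + d'*(-b) = 0 := by ring
      rw [e1, e2, c0, c1, c2, c4] at F1 H1
      unfold qf at F1
      have hb3 : (3:ℤ) ∣ b := by
        have hx3 : x % 3 = 1 := by
          have q3 : x % 3 = 0 ∨ x % 3 = 1 ∨ x % 3 = 2 := by omega
          obtain ⟨i, hi⟩ : ∃ i, x = 3*i + x % 3 := ⟨x/3, by omega⟩
          rcases q3 with q3 | q3 | q3
          · rw [q3] at hi; rw [hi] at h; ring_nf at h; omega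
          · exact q3
          · rw [q3] at hi; rw [hi] at h; ring_nf at h; omega
        have G0 := hF 1 0
        have G1 := hF 1 3
        have t1 : m*1+n'*0 = m := by ring
        have t2 : b*1+d'*0 = b := by ring
        have t3 : m*1+n'*3 = m+3*n' := by ring
        have t4 : b*1+d'*3 = b+3*d' := by ring
        rw [t1, t2] at G0
        rw [t3, t4] at G1
        rw [c0, c1, c2, c4] at G0 G1
        have G0' : qf 3 0 (-13*x) (26*z) (-169*x^2) m b = 3 := by
          rw [G0]; unfold qf; ring
        rcases c3 with c3 | c3
        · exact three_dvd_b x z m b n' d' (-1599+624) hx3 hdet' G0' (by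
            rw [G1, c3]; unfold qf; norm_num)
        · exact three_dvd_b x z m b n' d' (-1599-624) hx3 hdet' G0' (by
            rw [G1, c3]; unfold qf; norm_num)
      have hq : -b = 0 := by
        rcases c3 with c3 | c3
        · rw [c3] at F1
          exact solve_g1 d' (-b) (by omega) (by linarith)
        · rw [c3] at F1
          have := solve_g1 d' (-(-b)) (by omega) (by linarith)
          omega
      rw [hq] at F1 H1
      unfold qh at H1
      have : d'^4 = 1 := by linarith
      have e3 : (39:ℤ)*x = 39*d'^4 := by linarith
      rw [this] at e3; omega
    · exfalso
      obtain ⟨c0, c1, c2, c4⟩ := hc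
      have F1 := hF 0 1
      have R := res1 x z (m*0+n'*1) (b*0+d'*1) (-m) (-b) hx4 hz2 (by linarith)
      rw [F1, c4] at R
      unfold qf at R
      simp at R
    · exfalso
      obtain ⟨c0, c1, c2, c3⟩ := hc
      have R := key 1 (-1)
      unfold qf at R
      rcases c3 with ⟨c3, c4⟩ | ⟨c3, c4⟩ <;> rw [c0, c1, c2, c3, c4] at R <;> norm_num at R

theorem eq1 (X Y : ℤ) (h : Y^2 = X^3 - 4563) : X = 39 := by
  have hpar := (parity1 X Y h).1
  obtain ⟨x, z, hX, hY, hxz⟩ := desc1 X Y h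
  have hz2 : z % 2 = 0 := by omega
  have : x = 1 := by
    rcases lt_trichotomy z 0 with hz | hz | hz
    · exact eq1_pos x (-z) (by rw [neg_sq]; exact hxz) (by omega) (by omega)
    · rw [hz] at hxz; omega
    · exact eq1_pos x z hxz hz2 hz
  rw [hX, this]; rfl

theorem stmt_12 :
    (∀ X Y : ℤ, Y ^ 2 = X ^ 3 - 4563 ↔ (X = 39 ∧ Y = 234) ∨ (X = 39 ∧ Y = -234)) ∧
    (¬ ∃ X Y : ℤ, Y ^ 2 = X ^ 3 + 4563) := by
  refine ⟨fun X Y => ⟨fun h => ?_, ?_⟩, fun ⟨X, Y, h⟩ => no2 X Y h⟩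
  · have hX := eq1 X Y h
    subst hX
    have h2 : Y^2 = 234^2 := by rw [h]; norm_num
    rcases sq_eq_sq_iff_eq_or_eq_neg.1 h2 with h3 | h3
    · exact Or.inl ⟨rfl, h3⟩
    · exact Or.inr ⟨rfl, h3⟩
  · rintro (⟨rfl, rfl⟩ | ⟨rfl, rfl⟩) <;> norm_num
end
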